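/- arXiv:2403.02964 — 2 statements merged into one kernel-verified Lean document; each statement's English description precedes it below -/
import Mathlib

section
/- Let γ ∈ (0,1], t₁ > 0, M ≥ 0, and let w : [0, t₁] → ℂ be continuously differentiable with w(0) = 0, w'(0) = 1, and |w'(t) − w'(s)| ≤ M|t − s|^γ for all s, t ∈ [0, t₁]. Then there exist r₁ > 0, a constant C > 0, and a strictly increasing continuous bijection τ : [0, r₁] → [0, τ(r₁)] with τ(r₁) ≤ t₁, continuously differentiable on (0, r₁), such that the reparametrization w₊ := w ∘ τ satisfies: |w₊(r)| = r for all r ∈ [0, r₁]; |Arg w₊(r)| ≤ C r^γ for all r ∈ (0, r₁]; and |w₊'(r) − 1| ≤ C r^γ for all r ∈ (0, r₁], where Arg denotes the principal argument. -/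
open Set

/-!
Near the origin `w t` stays within `ω t * t` of the ray `t • e`, where `ω t = M * t ^ γ` bounds the
deviation of the velocity from the tangent direction `e`. So both the unit vector `w t / ‖w t‖` and
the velocity are `O(ω t)`-close to `e`, and hence the derivative `⟪w / ‖w‖, w'⟫` of `‖w‖` is
`O(ω t)`-close to `1`. The distance to the origin is therefore strictly increasing with a `C¹`
inverse `τ`, the velocity of `w ∘ τ` is `w' / ⟪w / ‖w‖, w'⟫`, and `t ≤ 2 * ‖w t‖` turns bounds in
terms of `t ^ γ` into bounds in terms of `r ^ γ`. Nothing here is special to the plane: the argument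
of `w (τ r)` is, up to sign, its angle with `e = 1`.
-/

section InverseFunctions

theorem continuousOn_of_invOn_isCompact {X Y : Type*} [TopologicalSpace X] [TopologicalSpace Y]
    [T2Space Y] {f : X → Y} {g : Y → X} {s : Set X} {t : Set Y} (hs : IsCompact s)
    (hf : ContinuousOn f s) (hg : MapsTo g t s) (hinv : InvOn g f s t) : ContinuousOn g t := by
  refine continuousOn_iff_isClosed.2 fun c hc ↦ ⟨f '' (s ∩ c),
    ((hs.inter_right hc).image_of_continuousOn (hf.mono inter_subset_left)).isClosed, ?_⟩
  ext y
  refine and_congr_left fun hy ↦ ⟨fun hgy ↦ ⟨g y, ⟨hg hy, hgy⟩, hinv.2 hy⟩, ?_⟩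
  rintro ⟨x, ⟨hxs, hxc⟩, rfl⟩
  rwa [mem_preimage, hinv.1 hxs]

theorem hasDerivWithinAt_inv_of_rightInvOn {𝕜 : Type*} [NontriviallyNormedField 𝕜] {f g : 𝕜 → 𝕜}
    {f' y : 𝕜} {s t : Set 𝕜} (hg : ContinuousOn g t) (hmaps : MapsTo g t s)
    (hinv : RightInvOn g f t) (hy : y ∈ t) (hf : HasDerivWithinAt f f' s (g y)) (hf' : f' ≠ 0) :
    HasDerivWithinAt g f'⁻¹ t y :=
  HasFDerivWithinAt.of_local_left_inverse
    (f' := ContinuousLinearEquiv.unitsEquivAut 𝕜 (Units.mk0 f' hf'))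
    ((hg y hy).tendsto_nhdsWithin hmaps) hf hy (eventually_mem_nhdsWithin.mono hinv)

theorem strictMonoOn_of_rightInvOn_of_mapsTo {α β : Type*} [LinearOrder α] [Preorder β]
    {f : α → β} {g : β → α} {s : Set α} {t : Set β} (hf : StrictMonoOn f s)
    (hmaps : MapsTo g t s) (hinv : RightInvOn g f t) : StrictMonoOn g t := fun x hx y hy hxy ↦
  (hf.lt_iff_lt (hmaps hx) (hmaps hy)).1 (by rwa [hinv hx, hinv hy])

theorem bijOn_Icc_of_strictMonoOn {α β : Type*} [ConditionallyCompleteLinearOrder α]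
    [DenselyOrdered α] [TopologicalSpace α] [OrderTopology α] [LinearOrder β] [TopologicalSpace β]
    [OrderClosedTopology β] {f : α → β} {a b : α} (hab : a ≤ b)
    (hf : ContinuousOn f (Icc a b)) (hmono : StrictMonoOn f (Icc a b)) :
    BijOn f (Icc a b) (Icc (f a) (f b)) :=
  ⟨hmono.monotoneOn.mapsTo_Icc, hmono.injOn, intermediate_value_Icc hab hf⟩

end InverseFunctions

section UnitVectors

open NormedSpace InnerProductGeometry

variable {E : Type*} [NormedAddCommGroup E]

section NormedSpace

variable [NormedSpace ℝ E] {e : E}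

theorem norm_sub_norm_smul_le (he : ‖e‖ = 1) {t : ℝ} (ht : 0 ≤ t) (x : E) :
    ‖x - ‖x‖ • e‖ ≤ 2 * ‖x - t • e‖ := by
  have hnorm : |t - ‖x‖| ≤ ‖x - t • e‖ := by
    simpa [norm_smul, he, abs_of_nonneg ht, abs_sub_comm] using abs_norm_sub_norm_le x (t • e)
  calc ‖x - ‖x‖ • e‖ = ‖(x - t • e) + (t - ‖x‖) • e‖ := by congr 1; module
    _ ≤ ‖x - t • e‖ + |t - ‖x‖| := (norm_add_le _ _).trans_eq (by simp [norm_smul, he])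
    _ ≤ 2 * ‖x - t • e‖ := by linarith

theorem norm_normalize_sub_le_div (he : ‖e‖ = 1) {t : ℝ} (ht : 0 ≤ t) {x : E} (hx : x ≠ 0) :
    ‖normalize x - e‖ ≤ 2 * ‖x - t • e‖ / ‖x‖ := by
  have hx' : 0 < ‖x‖ := norm_pos_iff.2 hx
  rw [le_div_iff₀' hx']
  calc ‖x‖ * ‖normalize x - e‖ = ‖x - ‖x‖ • e‖ := by
        rw [← norm_norm x, ← norm_smul, norm_norm, smul_sub, norm_smul_normalize]
    _ ≤ 2 * ‖x - t • e‖ := norm_sub_norm_smul_le he ht x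

theorem norm_inv_smul_sub_le (he : ‖e‖ = 1) {c : ℝ} (hc : 0 < c) (v : E) :
    ‖c⁻¹ • v - e‖ ≤ c⁻¹ * (‖v - e‖ + |c - 1|) := by
  have hdecomp : c⁻¹ • v - e = c⁻¹ • ((v - e) - (c - 1) • e) := by
    match_scalars <;> field_simp
    ring
  rw [hdecomp, norm_smul, Real.norm_of_nonneg (inv_nonneg.2 hc.le)]
  gcongr
  exact (norm_sub_le _ _).trans_eq (by simp [norm_smul, he])

end NormedSpace

variable [InnerProductSpace ℝ E]

theorem abs_inner_sub_one_le {u e : E} (hu : ‖u‖ = 1) (he : ‖e‖ = 1) (v : E) :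
    |inner ℝ u v - 1| ≤ ‖v - e‖ + ‖u - e‖ := by
  have hdecomp : inner ℝ u v - 1 = inner ℝ u (v - e) + inner ℝ (u - e) e := by
    rw [inner_sub_right, inner_sub_left, real_inner_self_eq_norm_sq, he]
    ring
  calc |inner ℝ u v - 1| ≤ |inner ℝ u (v - e)| + |inner ℝ (u - e) e| := by
        rw [hdecomp]; exact abs_add_le _ _
    _ ≤ ‖u‖ * ‖v - e‖ + ‖u - e‖ * ‖e‖ :=
        add_le_add (abs_real_inner_le_norm _ _) (abs_real_inner_le_norm _ _)
    _ = ‖v - e‖ + ‖u - e‖ := by rw [hu, he, one_mul, mul_one]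

theorem angle_le_pi_div_two_mul_norm_sub {x y : E} (hx : ‖x‖ = 1) (hy : ‖y‖ = 1) :
    angle x y ≤ Real.pi / 2 * ‖x - y‖ := by
  have hchord : ‖x - y‖ ^ 2 = 2 - 2 * Real.cos (angle x y) := by
    rw [norm_sub_sq_real, ← cos_angle_mul_norm_mul_norm, hx, hy]
    ring
  have hcos : Real.cos (angle x y) ≤ 1 - 2 / Real.pi ^ 2 * angle x y ^ 2 :=
    Real.cos_le_one_sub_mul_cos_sq (by
      rw [abs_of_nonneg (angle_nonneg x y)]; exact angle_le_pi x y)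
  refine le_of_sq_le_sq ?_ (by positivity)
  calc angle x y ^ 2 = Real.pi ^ 2 / 4 * (2 * (2 / Real.pi ^ 2 * angle x y ^ 2)) := by
        field_simp; ring
    _ ≤ Real.pi ^ 2 / 4 * ‖x - y‖ ^ 2 := by gcongr; linarith
    _ = (Real.pi / 2 * ‖x - y‖) ^ 2 := by ring

end UnitVectors

theorem abs_arg_le_angle_one (z : ℂ) : |z.arg| ≤ InnerProductGeometry.angle 1 z := by
  rcases eq_or_ne z 0 with rfl | hz
  · simpa using InnerProductGeometry.angle_nonneg 1 (0 : ℂ)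
  · exact (Complex.angle_one_left hz).ge

theorem exists_mem_Ioc_mul_rpow_le (M : ℝ) {γ δ b : ℝ} (hγ : 0 < γ) (hδ : 0 < δ) (hb : 0 < b) :
    ∃ t ∈ Ioc 0 b, M * t ^ γ ≤ δ := by
  have hcont : ContinuousAt (fun t : ℝ ↦ M * t ^ γ) 0 :=
    (Real.continuousAt_rpow_const 0 γ (Or.inr hγ.le)).const_mul M
  have hsmall : ∀ᶠ t in nhdsWithin (0 : ℝ) (Ioi 0), M * t ^ γ < δ :=
    nhdsWithin_le_nhds (hcont.eventually_lt_const (by simpa [Real.zero_rpow hγ.ne'] using hδ))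
  obtain ⟨t, htδ, ht⟩ := (hsmall.and (Ioc_mem_nhdsGT hb)).exists
  exact ⟨t, ht, htδ.le⟩

section Curves

open NormedSpace InnerProductGeometry

variable {E : Type*} [NormedAddCommGroup E]

/-- `τ` reparametrizes the curve `w` on `[0, T]` by the distance to the origin: it is the inverse
of `t ↦ ‖w t‖`. -/
structure IsNormReparametrization (w : ℝ → E) (T : ℝ) (τ : ℝ → ℝ) : Prop where
  bijOn : BijOn τ (Icc 0 ‖w T‖) (Icc 0 T)
  invOn : InvOn τ (fun t ↦ ‖w t‖) (Icc 0 T) (Icc 0 ‖w T‖)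

namespace IsNormReparametrization

variable {w : ℝ → E} {τ : ℝ → ℝ} {T r : ℝ}

theorem norm_apply (hτ : IsNormReparametrization w T τ) (hr : r ∈ Icc 0 ‖w T‖) : ‖w (τ r)‖ = r :=
  hτ.invOn.2 hr

theorem apply_norm (hτ : IsNormReparametrization w T τ) (hT : 0 ≤ T) : τ ‖w T‖ = T :=
  hτ.invOn.1 (right_mem_Icc.2 hT)

theorem apply_mem_Ioc (hτ : IsNormReparametrization w T τ) (hw0 : w 0 = 0)
    (hr : r ∈ Ioc 0 ‖w T‖) : τ r ∈ Ioc 0 T := by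
  have hr' := Ioc_subset_Icc_self hr
  have hτr := hτ.bijOn.mapsTo hr'
  refine ⟨hτr.1.lt_of_ne fun h0 ↦ hr.1.ne ?_, hτr.2⟩
  rw [← hτ.norm_apply hr', ← h0, hw0, norm_zero]

theorem strictMonoOn (hτ : IsNormReparametrization w T τ)
    (hw : StrictMonoOn (fun t ↦ ‖w t‖) (Icc 0 T)) : StrictMonoOn τ (Icc 0 ‖w T‖) :=
  strictMonoOn_of_rightInvOn_of_mapsTo hw hτ.bijOn.mapsTo hτ.invOn.2

theorem continuousOn (hτ : IsNormReparametrization w T τ) (hw : ContinuousOn w (Icc 0 T)) :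
    ContinuousOn τ (Icc 0 ‖w T‖) :=
  continuousOn_of_invOn_isCompact isCompact_Icc hw.norm hτ.bijOn.mapsTo hτ.invOn

end IsNormReparametrization

theorem norm_sub_smul_le_of_norm_deriv_sub_le [NormedSpace ℝ E] {w w' : ℝ → E} {e : E} {K t : ℝ}
    (ht : 0 ≤ t) (hw0 : w 0 = 0)
    (hw : ∀ s ∈ Icc 0 t, HasDerivWithinAt w (w' s) (Icc 0 t) s)
    (hK : ∀ s ∈ Icc 0 t, ‖w' s - e‖ ≤ K) : ‖w t - t • e‖ ≤ K * t := by
  have hderiv : ∀ s ∈ Icc 0 t,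
      HasDerivWithinAt (fun s ↦ w s - s • e) (w' s - e) (Icc 0 t) s := fun s hs ↦ by
    simpa using (hw s hs).fun_sub ((hasDerivWithinAt_id s _).smul_const e)
  simpa [hw0, abs_of_nonneg ht] using (convex_Icc 0 t).norm_image_sub_le_of_norm_hasDerivWithin_le
    hderiv hK (left_mem_Icc.2 ht) (right_mem_Icc.2 ht)

variable [InnerProductSpace ℝ E]

/-- The speed `⟪w / ‖w‖, w'⟫` at which a curve `w` with velocity `w'` moves away from the origin;
it is `0` where `w` vanishes. -/
noncomputable def radialSpeed (w w' : ℝ → E) (t : ℝ) : ℝ := inner ℝ (normalize (w t)) (w' t)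

theorem hasDerivWithinAt_norm_radialSpeed {w w' : ℝ → E} {s : Set ℝ} {t : ℝ}
    (hw : HasDerivWithinAt w (w' t) s t) (ht : w t ≠ 0) :
    HasDerivWithinAt (fun t ↦ ‖w t‖) (radialSpeed w w' t) s t := by
  have hsqrt := hw.norm_sq.sqrt (pow_ne_zero 2 (norm_ne_zero_iff.2 ht))
  simp only [Real.sqrt_sq (norm_nonneg _)] at hsqrt
  convert hsqrt using 1
  rw [mul_div_mul_left _ _ two_ne_zero, radialSpeed, NormedSpace.normalize, real_inner_smul_left,
    inv_mul_eq_div]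

theorem continuousOn_radialSpeed {w w' : ℝ → E} {s : Set ℝ} (hw : ContinuousOn w s)
    (hw' : ContinuousOn w' s) (hne : ∀ t ∈ s, w t ≠ 0) : ContinuousOn (radialSpeed w w') s :=
  ((hw.norm.inv₀ fun t ht ↦ norm_ne_zero_iff.2 (hne t ht)).smul hw).inner hw'

/-- `w` is a curve on `[0, T]` issuing from the origin whose velocity `w'` stays close to the unit
vector `e`: within the nondecreasing modulus `ω`, which is small enough (at most `1 / 10`) for the
radial speed of `w` to be at least `1 / 2`. -/
structure NearlyStraightOn (w w' : ℝ → E) (e : E) (ω : ℝ → ℝ) (T : ℝ) : Prop where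
  norm_direction : ‖e‖ = 1
  map_zero : w 0 = 0
  hasDerivWithinAt : ∀ t ∈ Icc 0 T, HasDerivWithinAt w (w' t) (Icc 0 T) t
  norm_velocity_sub_le : ∀ t ∈ Icc 0 T, ‖w' t - e‖ ≤ ω t
  monotoneOn : MonotoneOn ω (Icc 0 T)
  modulus_le : ∀ t ∈ Icc 0 T, ω t ≤ 1 / 10

namespace NearlyStraightOn

variable {w w' : ℝ → E} {e : E} {ω : ℝ → ℝ} {T t : ℝ}

theorem norm_sub_smul_le (h : NearlyStraightOn w w' e ω T) (ht : t ∈ Icc 0 T) :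
    ‖w t - t • e‖ ≤ ω t * t := by
  have hsub : Icc 0 t ⊆ Icc 0 T := Icc_subset_Icc_right ht.2
  exact norm_sub_smul_le_of_norm_deriv_sub_le ht.1 h.map_zero
    (fun s hs ↦ (h.hasDerivWithinAt s (hsub hs)).mono hsub)
    (fun s hs ↦ (h.norm_velocity_sub_le s (hsub hs)).trans (h.monotoneOn (hsub hs) ht hs.2))

theorem half_le_norm (h : NearlyStraightOn w w' e ω T) (ht : t ∈ Icc 0 T) : t / 2 ≤ ‖w t‖ := by
  have htri : t - ‖w t‖ ≤ ω t * t := by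
    simpa [norm_smul, h.norm_direction, abs_of_nonneg ht.1] using
      (norm_sub_norm_le (t • e) (w t)).trans
        ((norm_sub_rev _ _).trans_le (h.norm_sub_smul_le ht))
  linarith [mul_le_mul_of_nonneg_right (h.modulus_le t ht) ht.1, ht.1]

theorem ne_zero (h : NearlyStraightOn w w' e ω T) (ht : t ∈ Ioc 0 T) : w t ≠ 0 :=
  norm_pos_iff.1 ((half_pos ht.1).trans_le (h.half_le_norm (Ioc_subset_Icc_self ht)))

theorem norm_normalize_sub_le (h : NearlyStraightOn w w' e ω T) (ht : t ∈ Ioc 0 T) :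
    ‖normalize (w t) - e‖ ≤ 4 * ω t := by
  have ht' := Ioc_subset_Icc_self ht
  have hω : 0 ≤ ω t := (norm_nonneg _).trans (h.norm_velocity_sub_le t ht')
  refine (norm_normalize_sub_le_div h.norm_direction ht'.1 (h.ne_zero ht)).trans ?_
  rw [div_le_iff₀ (norm_pos_iff.2 (h.ne_zero ht))]
  calc 2 * ‖w t - t • e‖ ≤ 4 * ω t * (t / 2) := by linarith [h.norm_sub_smul_le ht']
    _ ≤ 4 * ω t * ‖w t‖ := by gcongr; exact h.half_le_norm ht'

theorem abs_radialSpeed_sub_one_le (h : NearlyStraightOn w w' e ω T) (ht : t ∈ Ioc 0 T) :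
    |radialSpeed w w' t - 1| ≤ 5 * ω t := by
  have hinner := abs_inner_sub_one_le (norm_normalize_eq_one_iff.2 (h.ne_zero ht))
    h.norm_direction (w' t)
  have hvelocity := h.norm_velocity_sub_le t (Ioc_subset_Icc_self ht)
  rw [radialSpeed]
  linarith [h.norm_normalize_sub_le ht]

theorem half_le_radialSpeed (h : NearlyStraightOn w w' e ω T) (ht : t ∈ Ioc 0 T) :
    1 / 2 ≤ radialSpeed w w' t := by
  linarith [(abs_le.1 (h.abs_radialSpeed_sub_one_le ht)).1,
    h.modulus_le t (Ioc_subset_Icc_self ht)]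

theorem radialSpeed_pos (h : NearlyStraightOn w w' e ω T) (ht : t ∈ Ioc 0 T) :
    0 < radialSpeed w w' t :=
  one_half_pos.trans_le (h.half_le_radialSpeed ht)

theorem angle_le (h : NearlyStraightOn w w' e ω T) (ht : t ∈ Ioc 0 T) :
    angle e (w t) ≤ 8 * ω t := by
  calc angle e (w t) = angle (normalize (w t)) e := by rw [angle_normalize_left, angle_comm]
    _ ≤ Real.pi / 2 * ‖normalize (w t) - e‖ := angle_le_pi_div_two_mul_norm_sub
        (norm_normalize_eq_one_iff.2 (h.ne_zero ht)) h.norm_direction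
    _ ≤ 2 * (4 * ω t) := by
        gcongr
        · linarith [Real.pi_le_four]
        · exact h.norm_normalize_sub_le ht
    _ = 8 * ω t := by ring

theorem norm_inv_radialSpeed_smul_sub_le (h : NearlyStraightOn w w' e ω T) (ht : t ∈ Ioc 0 T) :
    ‖(radialSpeed w w' t)⁻¹ • w' t - e‖ ≤ 12 * ω t := by
  have hinv : (radialSpeed w w' t)⁻¹ ≤ 2 :=
    inv_le_of_inv_le₀ two_pos (by simpa using h.half_le_radialSpeed ht)
  calc ‖(radialSpeed w w' t)⁻¹ • w' t - e‖
      ≤ (radialSpeed w w' t)⁻¹ * (‖w' t - e‖ + |radialSpeed w w' t - 1|) :=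
        norm_inv_smul_sub_le h.norm_direction (h.radialSpeed_pos ht) _
    _ ≤ 2 * (ω t + 5 * ω t) := by
        gcongr
        · exact h.norm_velocity_sub_le t (Ioc_subset_Icc_self ht)
        · exact h.abs_radialSpeed_sub_one_le ht
    _ = 12 * ω t := by ring

theorem continuousOn (h : NearlyStraightOn w w' e ω T) : ContinuousOn w (Icc 0 T) :=
  fun t ht ↦ (h.hasDerivWithinAt t ht).continuousWithinAt

theorem hasDerivWithinAt_norm (h : NearlyStraightOn w w' e ω T) (ht : t ∈ Ioc 0 T) :
    HasDerivWithinAt (fun t ↦ ‖w t‖) (radialSpeed w w' t) (Icc 0 T) t :=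
  hasDerivWithinAt_norm_radialSpeed (h.hasDerivWithinAt t (Ioc_subset_Icc_self ht)) (h.ne_zero ht)

theorem strictMonoOn_norm (h : NearlyStraightOn w w' e ω T) :
    StrictMonoOn (fun t ↦ ‖w t‖) (Icc 0 T) := by
  refine strictMonoOn_of_deriv_pos (convex_Icc 0 T) h.continuousOn.norm fun t ht ↦ ?_
  rw [interior_Icc] at ht
  have ht' := Ioo_subset_Ioc_self ht
  rw [((h.hasDerivWithinAt_norm ht').hasDerivAt (Icc_mem_nhds ht.1 ht.2)).deriv]
  exact h.radialSpeed_pos ht'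

end NearlyStraightOn

theorem NearlyStraightOn.exists_isNormReparametrization {w w' : ℝ → E} {e : E} {ω : ℝ → ℝ} {T : ℝ}
    (h : NearlyStraightOn w w' e ω T) (hT : 0 ≤ T) : ∃ τ, IsNormReparametrization w T τ := by
  have hbij : BijOn (fun t ↦ ‖w t‖) (Icc 0 T) (Icc 0 ‖w T‖) := by
    simpa [h.map_zero] using bijOn_Icc_of_strictMonoOn hT h.continuousOn.norm h.strictMonoOn_norm
  exact ⟨_, hbij.symm hbij.invOn_invFunOn.symm, hbij.invOn_invFunOn⟩

namespace IsNormReparametrization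

variable {w w' : ℝ → E} {e : E} {ω τ : ℝ → ℝ} {T r : ℝ}

theorem hasDerivWithinAt (hτ : IsNormReparametrization w T τ) (h : NearlyStraightOn w w' e ω T)
    (hr : r ∈ Ioc 0 ‖w T‖) :
    HasDerivWithinAt τ (radialSpeed w w' (τ r))⁻¹ (Icc 0 ‖w T‖) r := by
  have hτr := hτ.apply_mem_Ioc h.map_zero hr
  exact hasDerivWithinAt_inv_of_rightInvOn (hτ.continuousOn h.continuousOn) hτ.bijOn.mapsTo
    hτ.invOn.2 (Ioc_subset_Icc_self hr) (h.hasDerivWithinAt_norm hτr) (h.radialSpeed_pos hτr).ne'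

theorem continuousOn_inv_radialSpeed (hτ : IsNormReparametrization w T τ)
    (h : NearlyStraightOn w w' e ω T) (hw' : ContinuousOn w' (Icc 0 T)) :
    ContinuousOn (fun r ↦ (radialSpeed w w' (τ r))⁻¹) (Ioc 0 ‖w T‖) := by
  have hspeed : ContinuousOn (radialSpeed w w') (Ioc 0 T) :=
    continuousOn_radialSpeed (h.continuousOn.mono Ioc_subset_Icc_self)
      (hw'.mono Ioc_subset_Icc_self) fun _ ↦ h.ne_zero
  have hmaps : MapsTo τ (Ioc 0 ‖w T‖) (Ioc 0 T) := fun _ ↦ hτ.apply_mem_Ioc h.map_zero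
  exact (hspeed.comp ((hτ.continuousOn h.continuousOn).mono Ioc_subset_Icc_self) hmaps).inv₀
    fun r hr ↦ (h.radialSpeed_pos (hmaps hr)).ne'

theorem hasDerivWithinAt_comp (hτ : IsNormReparametrization w T τ)
    (h : NearlyStraightOn w w' e ω T) (hr : r ∈ Ioc 0 ‖w T‖) :
    HasDerivWithinAt (w ∘ τ) ((radialSpeed w w' (τ r))⁻¹ • w' (τ r)) (Icc 0 ‖w T‖) r :=
  (h.hasDerivWithinAt _ (hτ.bijOn.mapsTo (Ioc_subset_Icc_self hr))).scomp r
    (hτ.hasDerivWithinAt h hr) hτ.bijOn.mapsTo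

theorem apply_le_two_mul (hτ : IsNormReparametrization w T τ) (h : NearlyStraightOn w w' e ω T)
    (hr : r ∈ Icc 0 ‖w T‖) : τ r ≤ 2 * r := by
  linarith [h.half_le_norm (hτ.bijOn.mapsTo hr), hτ.norm_apply hr]

theorem apply_rpow_le (hτ : IsNormReparametrization w T τ) (h : NearlyStraightOn w w' e ω T)
    (hr : r ∈ Icc 0 ‖w T‖) {γ : ℝ} (hγ : 0 ≤ γ) : τ r ^ γ ≤ 2 ^ γ * r ^ γ := by
  rw [← Real.mul_rpow two_pos.le hr.1]
  exact Real.rpow_le_rpow (hτ.bijOn.mapsTo hr).1 (hτ.apply_le_two_mul h hr) hγ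

end IsNormReparametrization

theorem exists_nearlyStraightOn {w w' : ℝ → E} {e : E} {γ M b : ℝ} (hγ : 0 < γ) (hb : 0 < b)
    (hM : 0 ≤ M) (he : ‖e‖ = 1) (hw0 : w 0 = 0)
    (hw : ∀ t ∈ Icc 0 b, HasDerivWithinAt w (w' t) (Icc 0 b) t)
    (hw' : ∀ t ∈ Icc 0 b, ‖w' t - e‖ ≤ M * t ^ γ) :
    ∃ T ∈ Ioc 0 b, NearlyStraightOn w w' e (fun t ↦ M * t ^ γ) T := by
  obtain ⟨T, hT, hMT⟩ := exists_mem_Ioc_mul_rpow_le M hγ (by norm_num : (0 : ℝ) < 1 / 10) hb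
  have hsub : Icc 0 T ⊆ Icc 0 b := Icc_subset_Icc_right hT.2
  have hmono : MonotoneOn (fun t : ℝ ↦ M * t ^ γ) (Icc 0 T) := fun s hs t _ hst ↦
    mul_le_mul_of_nonneg_left (Real.rpow_le_rpow hs.1 hst hγ.le) hM
  exact ⟨T, hT,
    { norm_direction := he
      map_zero := hw0
      hasDerivWithinAt := fun t ht ↦ (hw t (hsub ht)).mono hsub
      norm_velocity_sub_le := fun t ht ↦ hw' t (hsub ht)
      monotoneOn := hmono
      modulus_le := fun t ht ↦ (hmono ht (right_mem_Icc.2 hT.1.le) ht.2).trans hMT }⟩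

theorem stmt_2_general {w w' : ℝ → E} {e : E} {γ t₁ M : ℝ} (hγ : 0 < γ) (ht₁ : 0 < t₁)
    (he : ‖e‖ = 1) (hwd : ∀ t ∈ Icc 0 t₁, HasDerivWithinAt w (w' t) (Icc 0 t₁) t)
    (hw'c : ContinuousOn w' (Icc 0 t₁)) (hw0 : w 0 = 0)
    (hw' : ∀ t ∈ Icc 0 t₁, ‖w' t - e‖ ≤ M * t ^ γ) :
    ∃ r₁ > (0 : ℝ), ∃ C > (0 : ℝ), ∃ τ τ' : ℝ → ℝ,
      τ r₁ ≤ t₁ ∧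
      StrictMonoOn τ (Icc 0 r₁) ∧
      ContinuousOn τ (Icc 0 r₁) ∧
      BijOn τ (Icc 0 r₁) (Icc 0 (τ r₁)) ∧
      (∀ r ∈ Ioo 0 r₁, HasDerivAt τ (τ' r) r) ∧
      ContinuousOn τ' (Ioo 0 r₁) ∧
      (∀ r ∈ Icc 0 r₁, ‖w (τ r)‖ = r) ∧
      (∀ r ∈ Ioc 0 r₁, angle e (w (τ r)) ≤ C * r ^ γ) ∧
      (∀ r ∈ Ioc 0 r₁, ∃ d : E,
        HasDerivWithinAt (w ∘ τ) d (Icc 0 r₁) r ∧ ‖d - e‖ ≤ C * r ^ γ) := by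
  have hM : 0 ≤ M := nonneg_of_mul_nonneg_left
    ((norm_nonneg _).trans (hw' t₁ (right_mem_Icc.2 ht₁.le))) (Real.rpow_pos_of_pos ht₁ γ)
  obtain ⟨T, hT, h⟩ := exists_nearlyStraightOn hγ ht₁ hM he hw0 hwd hw'
  obtain ⟨τ, hτ⟩ := h.exists_isNormReparametrization hT.1.le
  have hτmem : ∀ r ∈ Ioc 0 ‖w T‖, τ r ∈ Ioc 0 T := fun _ ↦ hτ.apply_mem_Ioc hw0
  have hmodulus : ∀ r ∈ Ioc 0 ‖w T‖, 12 * (M * τ r ^ γ) ≤ (12 * (M * 2 ^ γ) + 1) * r ^ γ := by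
    intro r hr
    have hτr := mul_le_mul_of_nonneg_left (hτ.apply_rpow_le h (Ioc_subset_Icc_self hr) hγ.le) hM
    linarith [Real.rpow_nonneg hr.1.le γ]
  refine ⟨‖w T‖, norm_pos_iff.2 (h.ne_zero (right_mem_Ioc.2 hT.1)), 12 * (M * 2 ^ γ) + 1,
    by positivity, τ, fun r ↦ (radialSpeed w w' (τ r))⁻¹, ?_, hτ.strictMonoOn h.strictMonoOn_norm,
    hτ.continuousOn h.continuousOn, ?_, fun r hr ↦ ?_, ?_, fun r ↦ hτ.norm_apply,
    fun r hr ↦ ?_, fun r hr ↦ ⟨_, hτ.hasDerivWithinAt_comp h hr, ?_⟩⟩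
  · exact (hτ.apply_norm hT.1.le).trans_le hT.2
  · rw [hτ.apply_norm hT.1.le]; exact hτ.bijOn
  · exact (hτ.hasDerivWithinAt h (Ioo_subset_Ioc_self hr)).hasDerivAt (Icc_mem_nhds hr.1 hr.2)
  · exact (hτ.continuousOn_inv_radialSpeed h
      (hw'c.mono (Icc_subset_Icc_right hT.2))).mono Ioo_subset_Ioc_self
  · have hω : 0 ≤ M * τ r ^ γ := mul_nonneg hM (Real.rpow_nonneg (hτmem r hr).1.le γ)
    linarith [h.angle_le (hτmem r hr), hmodulus r hr]
  · exact (h.norm_inv_radialSpeed_smul_sub_le (hτmem r hr)).trans (hmodulus r hr)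

end Curves

/-- A `C^{1,γ}` curve `w` ending at `0` with `w'(0) = 1` can be
reparametrized by its distance to the origin: there exist `r₁ > 0`, `C > 0` and a
strictly increasing continuous bijection `τ : [0, r₁] → [0, τ r₁]`, continuously
differentiable on `(0, r₁)`, with `τ r₁ ≤ t₁`, such that `w₊ := w ∘ τ` satisfies
`|w₊ r| = r` on `[0, r₁]`, `|Arg (w₊ r)| ≤ C r^γ` and `|w₊' r - 1| ≤ C r^γ` on `(0, r₁]`. -/
theorem stmt_2 (γ t₁ M : ℝ) (hγ0 : 0 < γ) (hγ1 : γ ≤ 1) (ht₁ : 0 < t₁) (hM : 0 ≤ M)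
    (w w' : ℝ → ℂ)
    (hwd : ∀ t ∈ Icc (0:ℝ) t₁, HasDerivWithinAt w (w' t) (Icc 0 t₁) t)
    (hw'c : ContinuousOn w' (Icc 0 t₁))
    (hw0 : w 0 = 0) (hw'0 : w' 0 = 1)
    (hwH : ∀ s ∈ Icc (0:ℝ) t₁, ∀ t ∈ Icc (0:ℝ) t₁, ‖w' t - w' s‖ ≤ M * |t - s| ^ γ) :
    ∃ r₁ > (0:ℝ), ∃ C > (0:ℝ), ∃ τ τ' : ℝ → ℝ,
      τ r₁ ≤ t₁ ∧
      StrictMonoOn τ (Icc 0 r₁) ∧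
      ContinuousOn τ (Icc 0 r₁) ∧
      BijOn τ (Icc 0 r₁) (Icc 0 (τ r₁)) ∧
      (∀ r ∈ Ioo (0:ℝ) r₁, HasDerivAt τ (τ' r) r) ∧
      ContinuousOn τ' (Ioo 0 r₁) ∧
      (∀ r ∈ Icc (0:ℝ) r₁, ‖w (τ r)‖ = r) ∧
      (∀ r ∈ Ioc (0:ℝ) r₁, |Complex.arg (w (τ r))| ≤ C * r ^ γ) ∧
      (∀ r ∈ Ioc (0:ℝ) r₁, ∃ d : ℂ,
        HasDerivWithinAt (w ∘ τ) d (Icc 0 r₁) r ∧ ‖d - 1‖ ≤ C * r ^ γ) := by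
  obtain ⟨r₁, hr₁, C, hC, τ, τ', hle, hmono, hcont, hbij, hτ', hτ'c, hnorm, hangle, hderiv⟩ :=
    stmt_2_general hγ0 ht₁ norm_one hwd hw'c hw0 fun t ht ↦ by
      simpa [hw'0, abs_of_nonneg ht.1] using hwH 0 (left_mem_Icc.2 ht₁.le) t ht
  exact ⟨r₁, hr₁, C, hC, τ, τ', hle, hmono, hcont, hbij, hτ', hτ'c, hnorm,
    fun r hr ↦ (abs_arg_le_angle_one _).trans (hangle r hr), hderiv⟩
end

section
/- Given ρ₀ > 0 and continuous functions φ₊, φ₋ : (0, ρ₀] → ℝ that extend continuously to [0, ρ₀] and satisfy 0 < Θ(r) := φ₋(r) − φ₊(r) ≤ 2π for all r ∈ (0, ρ₀], let Ω = {r e^{iθ} : 0 < r < ρ₀, φ₊(r) < θ < φ₋(r)} ⊂ ℂ be the associated polar domain. Let 0 < r₀ < ρ₀. Suppose u : ℂ → ℝ is harmonic on Ω, u(z) ≤ 1 for all z ∈ Ω, and for every boundary point ζ ∈ ∂Ω with |ζ| > r₀ one has limsup_{Ω ∋ z → ζ} u(z) ≤ 0. Then for every z ∈ Ω with |z| > r₀,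 u(z) ≤ (8/π) exp(−π ∫_{r₀}^{|z|} ds/(s Θ(s))). -/
open Set

/-- `u : ℂ → ℝ` is harmonic on an open set `U ⊂ ℂ`: it is twice continuously
differentiable on `U` and its Laplacian `∂²u/∂x² + ∂²u/∂y²` vanishes on `U`. -/
def HarmonicOnSet (u : ℂ → ℝ) (U : Set ℂ) : Prop :=
  ContDiffOn ℝ 2 u U ∧
    ∀ z ∈ U,
      iteratedFDeriv ℝ 2 u z ![1, 1] + iteratedFDeriv ℝ 2 u z ![Complex.I, Complex.I] = 0

/-- The polar domain `{r e^{iθ} : 0 < r < ρ₀, φ₊(r) < θ < φ₋(r)}`. -/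
def polarDomain (ρ₀ : ℝ) (φp φm : ℝ → ℝ) : Set ℂ :=
  {z | ∃ r θ : ℝ, 0 < r ∧ r < ρ₀ ∧ φp r < θ ∧ θ < φm r ∧
      z = (r : ℂ) * Complex.exp (θ * Complex.I)}

/-!
In the coordinate `log z` the domain becomes a strip `{a x < y < b x}` of width `L x = Θ (exp x)`,
and the claim is decay like `exp (-π ∫ 1 / L)`. Cut `u` off below a small level to a smooth
subharmonic function vanishing near the sides of the strip, and let `p ≥ 0` be the inverse
Gudermannian of `π / 2` times the result. Subharmonicity becomes `Δ p ≥ tanh p |∇p|²`, which makes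
the divergence of the field `tanh p ∇p` at least `|∇p|²`. Hence the inward flux `Y` of this field
through vertical segments satisfies `-Y' ≥ ∫ |∇p|²`.

Let `q` be the square of the value of `p` at the point of interest; by the maximum principle
`p² ≥ q` somewhere on every segment to the left of it. A one-dimensional inequality along the
segments gives `L (-Y') ≥ Y² + 2 π Y`. Since `Y` is also at least the Dirichlet integral of `p` to
the right of the segment, Hardy's inequality with an explicit harmonic weight gives `2 ∫ p² ≤ L Y`,
and with it `L (-Y') ≥ 2 Y + 4 q` and `L (-Y') ≥ 2 Y + 2 q² / Y`. Integrating the best of the three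
estimates bounds the Gudermannian of `p` by `4 exp (-π ∫ 1 / L)`.
-/

namespace Carleman

open Complex (I)
open Filter InnerProductSpace Laplacian MeasureTheory Real Topology

theorem sq_integral_mul_le {f g : ℝ → ℝ} {a b : ℝ} (hab : a ≤ b) (hf : Continuous f)
    (hg : Continuous g) :
    (∫ x in a..b, f x * g x) ^ 2 ≤ (∫ x in a..b, f x ^ 2) * ∫ x in a..b, g x ^ 2 := by
  have hquad (y : ℝ) : 0 ≤ (∫ x in a..b, g x ^ 2) * (y * y) + (2 * ∫ x in a..b, f x * g x) * y
      + ∫ x in a..b, f x ^ 2 := by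
    have hexpand : ∫ x in a..b, (f x + y * g x) ^ 2 = (∫ x in a..b, g x ^ 2) * (y * y)
        + (2 * ∫ x in a..b, f x * g x) * y + ∫ x in a..b, f x ^ 2 := by
      rw [← intervalIntegral.integral_const_mul, ← intervalIntegral.integral_mul_const,
        ← intervalIntegral.integral_mul_const, ← intervalIntegral.integral_add,
        ← intervalIntegral.integral_add]
      · congr 1; ext x; ring
      all_goals exact Continuous.intervalIntegrable (by fun_prop) _ _
    exact hexpand ▸ intervalIntegral.integral_nonneg hab fun x _ ↦ sq_nonneg _
  have := discrim_le_zero hquad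
  rw [discrim] at this
  linarith

section Tent

variable {f f' : ℝ → ℝ} {a b m : ℝ}

-- The primitive of `h` vanishing at `0`, composed with `f`, rises from `0` to its value at `m` and
-- falls back to `0`, so its total variation is at least twice that value.
theorem two_mul_integral_sq_le {h : ℝ → ℝ} (hf : ∀ x, HasDerivAt f (f' x) x)
    (hf' : Continuous f') (ha : f a = 0) (hb : f b = 0) (hm : m ∈ Icc a b) (hh : Continuous h) :
    (2 * ∫ t in 0..f m, h t) ^ 2 ≤ (∫ x in a..b, h (f x) ^ 2) * ∫ x in a..b, f' x ^ 2 := by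
  have hfc : Continuous f := continuous_iff_continuousAt.2 fun x ↦ (hf x).continuousAt
  have hint (u v : ℝ) : IntervalIntegrable (fun x ↦ |h (f x)| * |f' x|) volume u v :=
    Continuous.intervalIntegrable (by fun_prop) _ _
  have hsubst (u v : ℝ) : |∫ t in f u..f v, h t| ≤ |∫ x in u..v, (|h (f x)| * |f' x|)| := by
    rw [← intervalIntegral.integral_comp_mul_deriv (fun x _ ↦ hf x) hf'.continuousOn hh]
    simpa only [Function.comp_apply, norm_eq_abs, abs_mul] using
      intervalIntegral.norm_integral_le_abs_integral_norm (f := fun x ↦ (h ∘ f) x * f' x)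
        (a := u) (b := v)
  have hnn (u v : ℝ) (huv : u ≤ v) : 0 ≤ ∫ x in u..v, |h (f x)| * |f' x| :=
    intervalIntegral.integral_nonneg huv fun x _ ↦ by positivity
  have hleft := hsubst a m
  have hright := hsubst m b
  rw [ha, abs_of_nonneg (hnn a m hm.1)] at hleft
  rw [hb, abs_of_nonneg (hnn m b hm.2), intervalIntegral.integral_symm, abs_neg] at hright
  calc (2 * ∫ t in 0..f m, h t) ^ 2
      = (2 * |∫ t in 0..f m, h t|) ^ 2 := by rw [mul_pow, mul_pow, sq_abs]
    _ ≤ (∫ x in a..b, |h (f x)| * |f' x|) ^ 2 := by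
        rw [← intervalIntegral.integral_add_adjacent_intervals (hint a m) (hint m b)]
        gcongr
        linarith
    _ ≤ (∫ x in a..b, |h (f x)| ^ 2) * ∫ x in a..b, |f' x| ^ 2 :=
        sq_integral_mul_le (hm.1.trans hm.2) (by fun_prop) (by fun_prop)
    _ = _ := by simp only [sq_abs]

theorem four_mul_sq_le_mul_integral_sq (hf : ∀ x, HasDerivAt f (f' x) x) (hf' : Continuous f')
    (ha : f a = 0) (hb : f b = 0) (hm : m ∈ Icc a b) :
    4 * f m ^ 2 ≤ (b - a) * ∫ x in a..b, f' x ^ 2 := by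
  have := two_mul_integral_sq_le hf hf' ha hb hm (h := fun _ ↦ 1) continuous_const
  norm_num [mul_pow] at this
  exact this

theorem pow_four_le_integral_sq_mul_integral_sq (hf : ∀ x, HasDerivAt f (f' x) x)
    (hf' : Continuous f') (ha : f a = 0) (hb : f b = 0) (hm : m ∈ Icc a b) :
    f m ^ 4 ≤ (∫ x in a..b, f x ^ 2) * ∫ x in a..b, f' x ^ 2 := by
  have := two_mul_integral_sq_le hf hf' ha hb hm (h := id) continuous_id
  norm_num [mul_div_cancel₀, ← pow_mul] at this
  exact this

end Tent

theorem hasDerivAt_tanh (x : ℝ) : HasDerivAt tanh (1 / cosh x ^ 2) x := by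
  have h := (hasDerivAt_sinh x).div (hasDerivAt_cosh x) (cosh_pos x).ne'
  rw [show tanh = sinh / cosh from funext tanh_eq_sinh_div_cosh]
  refine h.congr_deriv ?_
  rw [← sq, ← sq, cosh_sq_sub_sinh_sq]

theorem tanh_sq_eq (x : ℝ) : tanh x ^ 2 = 1 - 1 / cosh x ^ 2 := by
  have := cosh_pos x
  rw [tanh_eq_sinh_div_cosh, div_pow, sinh_sq]
  field_simp

@[fun_prop]
theorem continuous_tanh : Continuous tanh :=
  continuous_iff_continuousAt.2 fun x ↦ (hasDerivAt_tanh x).continuousAt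

theorem tanh_strictMono : StrictMono tanh :=
  strictMono_of_hasDerivAt_pos hasDerivAt_tanh fun x ↦ by have := cosh_pos x; positivity

theorem tanh_pos {x : ℝ} (hx : 0 < x) : 0 < tanh x := tanh_zero ▸ tanh_strictMono hx

theorem tanh_nonneg {x : ℝ} (hx : 0 ≤ x) : 0 ≤ tanh x :=
  tanh_zero ▸ tanh_strictMono.monotone hx

theorem tanh_le_self {x : ℝ} (hx : 0 ≤ x) : tanh x ≤ x := by
  have hmono : MonotoneOn (fun y ↦ y - tanh y) (Ici 0) := by
    have hd (y : ℝ) := (hasDerivAt_id y).sub (hasDerivAt_tanh y)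
    refine monotoneOn_of_hasDerivWithinAt_nonneg (convex_Ici 0)
      (fun y _ ↦ (hd y).continuousAt.continuousWithinAt) (fun y _ ↦ (hd y).hasDerivWithinAt)
      fun y _ ↦ sub_nonneg.2 ?_
    exact div_le_one_of_le₀ (one_le_pow₀ (one_le_cosh y)) (by positivity)
  simpa using hmono self_mem_Ici hx hx

section TanhIntegral

variable {M τ : ℝ}

theorem sqrt_one_sub_tanh_div_tanh_sq (hM : 0 < M) :
    √(1 - (tanh τ / tanh M) ^ 2) = √(tanh M ^ 2 - tanh τ ^ 2) / tanh M := by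
  have ht := tanh_pos hM
  rw [← sqrt_sq ht.le, ← sqrt_div' _ (sq_nonneg _), sqrt_sq ht.le, div_pow, sub_div,
    div_self (by positivity)]

theorem sqrt_one_sub_sinh_div_sinh_sq (hM : 0 < M) :
    √(1 - (sinh τ / sinh M) ^ 2) = √(tanh M ^ 2 - tanh τ ^ 2) * cosh τ / tanh M := by
  have ht := tanh_pos hM
  have := sinh_pos_iff.2 hM
  have := cosh_pos τ
  have := cosh_pos M
  have hk : 0 ≤ cosh τ / tanh M := by positivity
  rw [mul_div_assoc, ← sqrt_sq hk, ← sqrt_mul' _ (sq_nonneg _)]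
  congr 1
  rw [tanh_eq_sinh_div_cosh, tanh_eq_sinh_div_cosh]
  field_simp
  linear_combination sinh τ ^ 2 * cosh_sq M - sinh M ^ 2 * cosh_sq τ

theorem hasDerivAt_arcsin_tanh_sub_arcsin_sinh (hτ : 0 < τ) (hτM : τ < M) :
    HasDerivAt (fun y ↦ arcsin (tanh y / tanh M) - 1 / cosh M * arcsin (sinh y / sinh M))
      √(tanh M ^ 2 - tanh τ ^ 2) τ := by
  have hM := hτ.trans hτM
  have ht := tanh_pos hM
  have hs := sinh_pos_iff.2 hM
  have := sinh_pos_iff.2 hτ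
  have := tanh_pos hτ
  have := cosh_pos τ
  have := cosh_pos M
  have hlt : tanh τ < tanh M := tanh_strictMono hτM
  have hw : 0 < tanh M ^ 2 - tanh τ ^ 2 := by nlinarith
  have harcsin {x : ℝ} (h0 : 0 ≤ x) (h1 : x < 1) := hasDerivAt_arcsin (by linarith) h1.ne
  have htanh := (harcsin (by positivity) ((div_lt_one ht).2 hlt)).comp τ
    ((hasDerivAt_tanh τ).div_const (tanh M))
  have hsinh := (harcsin (by positivity) ((div_lt_one hs).2 (sinh_lt_sinh.2 hτM))).comp τ
    ((hasDerivAt_sinh τ).div_const (sinh M))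
  rw [sqrt_one_sub_tanh_div_tanh_sq hM] at htanh
  rw [sqrt_one_sub_sinh_div_sinh_sq hM] at hsinh
  refine (htanh.sub (hsinh.const_mul (1 / cosh M))).congr_deriv ?_
  have hsq : √(tanh M ^ 2 - tanh τ ^ 2) ^ 2 = 1 / cosh τ ^ 2 - 1 / cosh M ^ 2 := by
    rw [sq_sqrt hw.le, tanh_sq_eq, tanh_sq_eq]; ring
  have := sqrt_pos.2 hw
  generalize √(tanh M ^ 2 - tanh τ ^ 2) = w at *
  rw [tanh_eq_sinh_div_cosh]
  field_simp at hsq ⊢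
  linear_combination -hsq

theorem integral_sqrt_tanh_sq_sub (hM : 0 ≤ M) :
    ∫ τ in 0..M, √(tanh M ^ 2 - tanh τ ^ 2) = π / 2 * (1 - 1 / cosh M) := by
  rcases hM.eq_or_lt with rfl | hM
  · simp
  have hs := (sinh_pos_iff.2 hM).ne'
  have ht := (tanh_pos hM).ne'
  rw [intervalIntegral.integral_eq_sub_of_hasDerivAt_of_le hM.le
    (Continuous.continuousOn (by fun_prop))
    (fun τ hτ ↦ hasDerivAt_arcsin_tanh_sub_arcsin_sinh hτ.1 hτ.2)
    (Continuous.intervalIntegrable (by fun_prop) _ _)]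
  simp only [div_self ht, div_self hs, arcsin_one, tanh_zero, sinh_zero, zero_div, arcsin_zero]
  ring

end TanhIntegral

section Slice

variable {f f' : ℝ → ℝ} {a b m : ℝ}

theorem pi_sq_mul_sq_le_of_isMax (hf : ∀ x, HasDerivAt f (f' x) x)
    (hf' : Continuous f') (ha : f a = 0) (hb : f b = 0) (h0 : ∀ x, 0 ≤ f x)
    (hm : m ∈ Icc a b) (hmax : ∀ x ∈ Icc a b, f x ≤ f m) :
    π ^ 2 * (1 - 1 / cosh (f m)) ^ 2 ≤
      (∫ x in a..b, (tanh (f m) ^ 2 - tanh (f x) ^ 2)) * ∫ x in a..b, f' x ^ 2 := by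
  have htent := two_mul_integral_sq_le hf hf' ha hb hm
    (h := fun τ ↦ √(tanh (f m) ^ 2 - tanh τ ^ 2)) (by fun_prop)
  have hsq : ∫ x in a..b, √(tanh (f m) ^ 2 - tanh (f x) ^ 2) ^ 2 =
      ∫ x in a..b, (tanh (f m) ^ 2 - tanh (f x) ^ 2) := by
    refine intervalIntegral.integral_congr fun x hx ↦ sq_sqrt (sub_nonneg.2 ?_)
    rw [uIcc_of_le (hm.1.trans hm.2)] at hx
    exact pow_le_pow_left₀ (tanh_nonneg (h0 x)) (tanh_strictMono.monotone (hmax x hx)) 2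
  rw [integral_sqrt_tanh_sq_sub (h0 m), hsq] at htent
  linarith

-- With `I = ∫ sech² f`, `L = b - a` and `c = sech (max f)`, the bound for a single maximum reads
-- `π² (1 - c)² ≤ (I - c² L) ∫ f'²`, and `L I (1 - c)² - (L - I) (I - c² L) = (I - c L)²`.
theorem pi_sq_mul_integral_tanh_sq_le (hab : a ≤ b) (hf : ∀ x, HasDerivAt f (f' x) x)
    (hf' : Continuous f') (ha : f a = 0) (hb : f b = 0) (h0 : ∀ x, 0 ≤ f x) :
    π ^ 2 * ∫ x in a..b, tanh (f x) ^ 2 ≤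
      (b - a) * (∫ x in a..b, f' x ^ 2) * ((b - a) - ∫ x in a..b, tanh (f x) ^ 2) := by
  have hfc : Continuous f := continuous_iff_continuousAt.2 fun x ↦ (hf x).continuousAt
  obtain ⟨m, hm, hmax⟩ := isCompact_Icc.exists_isMaxOn (nonempty_Icc.2 hab) hfc.continuousOn
  have hpeak := pi_sq_mul_sq_le_of_isMax hf hf' ha hb h0 hm hmax
  rw [intervalIntegral.integral_sub (Continuous.intervalIntegrable (by fun_prop) _ _)
    (Continuous.intervalIntegrable (by fun_prop) _ _), intervalIntegral.integral_const,
    smul_eq_mul, tanh_sq_eq (f m)] at hpeak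
  have hA : 0 ≤ ∫ x in a..b, f' x ^ 2 := intervalIntegral.integral_nonneg hab fun x _ ↦ sq_nonneg _
  have hN : 0 ≤ ∫ x in a..b, tanh (f x) ^ 2 :=
    intervalIntegral.integral_nonneg hab fun x _ ↦ sq_nonneg _
  rcases (one_le_cosh (f m)).eq_or_lt with hone | hone
  · have hzero : ∀ x ∈ uIcc a b, tanh (f x) ^ 2 = 0 := fun x hx ↦ by
      have hfm : f m = 0 := by_contra fun h ↦ (one_lt_cosh.2 h).ne hone
      rw [uIcc_of_le hab] at hx
      simp [le_antisymm (hfm ▸ hmax hx) (h0 x)]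
    rw [intervalIntegral.integral_congr hzero]
    simp only [intervalIntegral.integral_zero, mul_zero, sub_zero]
    have := sub_nonneg.2 hab
    positivity
  · have hc : 1 / cosh (f m) < 1 := (div_lt_one (cosh_pos _)).2 hone
    rw [← one_div_pow] at hpeak
    generalize 1 / cosh (f m) = c at *
    generalize (∫ x in a..b, tanh (f x) ^ 2) = N at *
    generalize (∫ x in a..b, f' x ^ 2) = A at *
    have hc' : 0 < (1 - c) ^ 2 := pow_pos (sub_pos.2 hc) 2
    refine le_of_mul_le_mul_right ?_ hc'
    nlinarith [mul_le_mul_of_nonneg_left hpeak hN,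
      mul_nonneg hA (sq_nonneg ((b - a) - N - c * (b - a)))]

end Slice

/-- The derivative of `f` in the direction `v`, as a function on the plane: `D 1` and `D I` are the
partial derivatives along the real and the imaginary axis. -/
noncomputable def D (v : ℂ) (f : ℂ → ℝ) (z : ℂ) : ℝ := fderiv ℝ f z v

/-- The squared length of the gradient of `f`. -/
noncomputable def gradSq (f : ℂ → ℝ) (z : ℂ) : ℝ := D 1 f z ^ 2 + D I f z ^ 2

section Derivatives

variable {f g : ℂ → ℝ} {z v : ℂ} {φ : ℝ → ℝ} {φ' : ℝ}

theorem D_congr (h : f =ᶠ[𝓝 z] g) : D v f =ᶠ[𝓝 z] D v g :=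
  h.fderiv.mono fun _ hw ↦ DFunLike.congr_fun hw v

theorem D_mul (hf : DifferentiableAt ℝ f z) (hg : DifferentiableAt ℝ g z) :
    D v (fun w ↦ f w * g w) z = f z * D v g z + g z * D v f z := by
  simp [D, fderiv_fun_mul hf hg]

theorem D_comp (hφ : HasDerivAt φ φ' (f z)) (hf : DifferentiableAt ℝ f z) :
    D v (fun w ↦ φ (f w)) z = φ' * D v f z := by
  change fderiv ℝ (φ ∘ f) z v = _
  simp [D, (hφ.comp_hasFDerivAt z hf.hasFDerivAt).fderiv]

theorem contDiffAt_D {m n : WithTop ℕ∞} (hf : ContDiffAt ℝ n f z) (hmn : m + 1 ≤ n) :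
    ContDiffAt ℝ m (D v f) z :=
  (hf.fderiv_right hmn).clm_apply contDiffAt_const

theorem contDiffOn_D {m n : WithTop ℕ∞} {U : Set ℂ} (hf : ContDiffOn ℝ n f U) (hU : IsOpen U)
    (hmn : m + 1 ≤ n) : ContDiffOn ℝ m (D v f) U := fun _ hz ↦
  (contDiffAt_D (hf.contDiffAt (hU.mem_nhds hz)) hmn).contDiffWithinAt

theorem laplacian_eq (hf : ContDiffAt ℝ 2 f z) : Δ f z = D 1 (D 1 f) z + D I (D I f) z := by
  have hd : DifferentiableAt ℝ (fderiv ℝ f) z :=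
    (hf.fderiv_right (m := 1) (by norm_num)).differentiableAt one_ne_zero
  have hD (v : ℂ) : D v (D v f) z = iteratedFDeriv ℝ 2 f z ![v, v] := by
    rw [iteratedFDeriv_two_apply]
    change fderiv ℝ (fun w ↦ fderiv ℝ f w v) z v = _
    simp [fderiv_clm_apply hd (differentiableAt_const v)]
  rw [laplacian_eq_iteratedFDeriv_complexPlane, hD, hD]

theorem div_comp_mul_grad (hφ : HasDerivAt φ φ' (f z)) (hf : ContDiffAt ℝ 2 f z) :
    D 1 (fun w ↦ φ (f w) * D 1 f w) z + D I (fun w ↦ φ (f w) * D I f w) z =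
      φ' * gradSq f z + φ (f z) * Δ f z := by
  have hfd : DifferentiableAt ℝ f z := hf.differentiableAt two_ne_zero
  have hdir (v : ℂ) : D v (fun w ↦ φ (f w) * D v f w) z =
      φ' * D v f z ^ 2 + φ (f z) * D v (D v f) z := by
    have hDf : DifferentiableAt ℝ (D v f) z :=
      (contDiffAt_D hf (m := 1) (by norm_num)).differentiableAt one_ne_zero
    rw [D_mul (hφ.differentiableAt.fun_comp' z hfd) hDf, D_comp hφ hfd]
    ring
  rw [hdir, hdir, laplacian_eq hf, gradSq]
  ring

theorem gradSq_comp (hφ : HasDerivAt φ φ' (f z)) (hf : DifferentiableAt ℝ f z) :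
    gradSq (fun w ↦ φ (f w)) z = φ' ^ 2 * gradSq f z := by
  rw [gradSq, gradSq, D_comp hφ hf, D_comp hφ hf]
  ring

theorem laplacian_comp {φ' : ℝ → ℝ} {φ'' : ℝ} (hφ : ∀ᶠ x in 𝓝 (f z), HasDerivAt φ (φ' x) x)
    (hφ' : HasDerivAt φ' φ'' (f z)) (hφ₂ : ContDiffAt ℝ 2 φ (f z)) (hf : ContDiffAt ℝ 2 f z) :
    Δ (fun w ↦ φ (f w)) z = φ'' * gradSq f z + φ' (f z) * Δ f z := by
  have hD (v : ℂ) : D v (fun w ↦ φ (f w)) =ᶠ[𝓝 z] fun w ↦ φ' (f w) * D v f w := by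
    filter_upwards [hf.eventually (by simp), hf.continuousAt.eventually hφ] with w hw hφw
    exact D_comp hφw (hw.differentiableAt two_ne_zero)
  rw [laplacian_eq (hφ₂.fun_comp z hf), (D_congr (hD 1)).eq_of_nhds, (D_congr (hD I)).eq_of_nhds,
    div_comp_mul_grad hφ' hf]

-- Picone's identity: the two sides differ by `|∇f - (f / g) ∇g|² - (f² / g) Δg`.
theorem div_sq_div_mul_grad_le (hf : DifferentiableAt ℝ f z) (hg : ContDiffAt ℝ 2 g z)
    (hpos : 0 < g z) (hΔ : Δ g z ≤ 0) :
    D 1 (fun w ↦ f w ^ 2 / g w * D 1 g w) z + D I (fun w ↦ f w ^ 2 / g w * D I g w) z ≤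
      gradSq f z := by
  have hgd : DifferentiableAt ℝ g z := hg.differentiableAt two_ne_zero
  have hdir (v : ℂ) : D v (fun w ↦ f w ^ 2 / g w * D v g w) z =
      D v f z ^ 2 - (D v f z - f z / g z * D v g z) ^ 2 + f z ^ 2 / g z * D v (D v g) z := by
    have hDg : DifferentiableAt ℝ (D v g) z :=
      (contDiffAt_D hg (m := 1) (by norm_num)).differentiableAt one_ne_zero
    simp only [div_eq_mul_inv]
    have hsq : D v (fun w ↦ f w ^ 2) z = 2 * f z * D v f z := by
      simpa using D_comp (v := v) (hasDerivAt_pow 2 (f z)) hf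
    rw [D_mul ((hf.fun_pow 2).fun_mul (hgd.fun_inv hpos.ne')) hDg,
      D_mul (hf.fun_pow 2) (hgd.fun_inv hpos.ne'),
      D_comp (hasDerivAt_inv hpos.ne') hgd, hsq]
    field_simp
    ring
  rw [hdir, hdir, gradSq]
  have hΔ' : f z ^ 2 / g z * (D 1 (D 1 g) z + D I (D I g) z) ≤ 0 :=
    mul_nonpos_of_nonneg_of_nonpos (by positivity) (laplacian_eq hg ▸ hΔ)
  nlinarith [sq_nonneg (D 1 f z - f z / g z * D 1 g z), sq_nonneg (D I f z - f z / g z * D I g z)]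

theorem hasDerivAt_horizontal {s θ : ℝ} (hf : DifferentiableAt ℝ f ⟨s, θ⟩) :
    HasDerivAt (fun t ↦ f ⟨t, θ⟩) (D 1 f ⟨s, θ⟩) s := by
  have hline : HasDerivAt (fun t : ℝ ↦ (⟨t, θ⟩ : ℂ)) 1 s := by
    simpa [Complex.mk_eq_add_mul_I] using
      (Complex.ofRealCLM.hasDerivAt (x := s)).add_const (θ * I : ℂ)
  exact hf.hasFDerivAt.comp_hasDerivAt s hline

theorem hasDerivAt_vertical {s θ : ℝ} (hf : DifferentiableAt ℝ f ⟨s, θ⟩) :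
    HasDerivAt (fun t ↦ f ⟨s, t⟩) (D I f ⟨s, θ⟩) θ := by
  have hline : HasDerivAt (fun t : ℝ ↦ (⟨s, t⟩ : ℂ)) I θ := by
    simpa [Complex.mk_eq_add_mul_I] using
      ((Complex.ofRealCLM.hasDerivAt (x := θ)).mul_const I).const_add (s : ℂ)
  exact hf.hasFDerivAt.comp_hasDerivAt θ hline

end Derivatives

section Flux

variable {F G : ℂ → ℝ} {x₀ s : ℝ}

theorem isOpen_rightHalfPlane (x₀ : ℝ) : IsOpen {z : ℂ | x₀ < z.re} :=
  isOpen_lt continuous_const Complex.continuous_re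

@[fun_prop]
theorem continuous_complex_mk {X : Type*} [TopologicalSpace X] {f g : X → ℝ} (hf : Continuous f)
    (hg : Continuous g) : Continuous fun x ↦ (⟨f x, g x⟩ : ℂ) :=
  Complex.equivRealProdCLM.symm.continuous.comp (hf.prodMk hg)

theorem continuous_vertical (hF : ContinuousOn F {z | x₀ < z.re}) (hs : x₀ < s) :
    Continuous fun θ : ℝ ↦ F ⟨s, θ⟩ :=
  hF.comp_continuous (by fun_prop) fun _ ↦ hs

theorem continuousOn_integral_vertical (hF : ContinuousOn F {z | s ≤ z.re}) (a b : ℝ) :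
    ContinuousOn (fun t ↦ ∫ θ in a..b, F ⟨t, θ⟩) (Ici s) := by
  have hext : Continuous (Function.uncurry fun t θ : ℝ ↦ F ⟨max s t, θ⟩) :=
    hF.comp_continuous (by fun_prop) fun q ↦ le_max_left s q.1
  refine (intervalIntegral.continuous_parametric_intervalIntegral_of_continuous' hext a b
    (μ := volume)).continuousOn.congr fun t ht ↦ ?_
  simp only [max_eq_right (mem_Ici.1 ht)]

theorem hasDerivAt_integral_vertical (hF : ContDiffOn ℝ 1 F {z | x₀ < z.re}) (hs : x₀ < s)
    (a b : ℝ) :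
    HasDerivAt (fun t ↦ ∫ θ in a..b, F ⟨t, θ⟩) (∫ θ in a..b, D 1 F ⟨s, θ⟩) s := by
  have hopen := isOpen_rightHalfPlane x₀
  have hD : ContinuousOn (D 1 F) {z | x₀ < z.re} :=
    (contDiffOn_D (m := 0) hF hopen le_rfl).continuousOn
  have hnhds : Ioi ((x₀ + s) / 2) ∩ Iio (s + 1) ∈ 𝓝 s :=
    inter_mem (Ioi_mem_nhds (by linarith)) (Iio_mem_nhds (by linarith))
  have hsub : Icc ((x₀ + s) / 2) (s + 1) ×ℂ uIcc a b ⊆ {z | x₀ < z.re} := fun z hz ↦ by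
    have : (x₀ + s) / 2 ≤ z.re := hz.1.1
    change x₀ < z.re
    linarith
  obtain ⟨C, hC⟩ :=
    (isCompact_Icc.reProdIm isCompact_uIcc).exists_bound_of_continuousOn (hD.mono hsub)
  refine (intervalIntegral.hasDerivAt_integral_of_dominated_loc_of_deriv_le
    (F := fun t θ ↦ F ⟨t, θ⟩) (F' := fun t θ ↦ D 1 F ⟨t, θ⟩) (bound := fun _ ↦ C) hnhds
    ?_ ?_ ?_ ?_ intervalIntegrable_const ?_).2
  · filter_upwards [Ioi_mem_nhds hs] with t ht
    exact (continuous_vertical hF.continuousOn ht).aestronglyMeasurable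
  · exact (continuous_vertical hF.continuousOn hs).intervalIntegrable _ _
  · exact (continuous_vertical hD hs).aestronglyMeasurable
  · exact .of_forall fun θ hθ t ht ↦
      hC ⟨t, θ⟩ ⟨⟨ht.1.le, ht.2.le⟩, uIoc_subset_uIcc hθ⟩
  · refine .of_forall fun θ _ t ht ↦ hasDerivAt_horizontal ?_
    have : x₀ < t := by have := mem_Ioi.1 ht.1; linarith
    exact (hF.contDiffAt (hopen.mem_nhds this)).differentiableAt one_ne_zero

theorem hasDerivAt_flux (hF : ContDiffOn ℝ 1 F {z | x₀ < z.re})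
    (hG : ContDiffOn ℝ 1 G {z | x₀ < z.re}) (hs : x₀ < s) {a b : ℝ} (ha : G ⟨s, a⟩ = 0)
    (hb : G ⟨s, b⟩ = 0) :
    HasDerivAt (fun t ↦ ∫ θ in a..b, F ⟨t, θ⟩)
      (∫ θ in a..b, (D 1 F ⟨s, θ⟩ + D I G ⟨s, θ⟩)) s := by
  have hcont {f : ℂ → ℝ} (hf : ContDiffOn ℝ 1 f {z | x₀ < z.re}) (v : ℂ) :
      Continuous fun θ : ℝ ↦ D v f ⟨s, θ⟩ :=
    continuous_vertical
      (contDiffOn_D (m := 0) hf (isOpen_rightHalfPlane x₀) le_rfl).continuousOn hs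
  have hvert : ∫ θ in a..b, D I G ⟨s, θ⟩ = 0 := by
    rw [intervalIntegral.integral_eq_sub_of_hasDerivAt (f := fun θ ↦ G ⟨s, θ⟩)
      (fun θ _ ↦ hasDerivAt_vertical ((hG.contDiffAt
        ((isOpen_rightHalfPlane x₀).mem_nhds hs)).differentiableAt one_ne_zero))
      ((hcont hG I).intervalIntegrable _ _), ha, hb, sub_zero]
  rw [intervalIntegral.integral_add ((hcont hF 1).intervalIntegrable _ _)
    ((hcont hG I).intervalIntegrable _ _), hvert, add_zero]
  exact hasDerivAt_integral_vertical hF hs a b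

end Flux

/-- A nonnegative `C²` function `p` on the half-plane `re z > x₀`, supported in the curved strip
`a (re z) < im z < b (re z)`, `re z < T`, and satisfying `Δ p ≥ tanh p |∇p|²`. The last inequality
says that the Gudermannian `arctan (sinh p)` of `p` is subharmonic. The number `R` only bounds the
strip. -/
structure StripSubsolution (x₀ T R : ℝ) (a b : ℝ → ℝ) (p : ℂ → ℝ) : Prop where
  lt : ∀ s, a s < b s
  neg_le : ∀ s, -R ≤ a s
  le : ∀ s, b s ≤ R
  contDiffOn : ContDiffOn ℝ 2 p {z | x₀ < z.re}
  nonneg : ∀ z, 0 ≤ p z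
  le_laplacian : ∀ z : ℂ, x₀ < z.re → tanh (p z) * gradSq p z ≤ Δ p z
  eventuallyEq_zero : ∀ z : ℂ, x₀ < z.re → z.im ∉ Ioo (a z.re) (b z.re) → p =ᶠ[𝓝 z] 0
  eq_zero_of_le : ∀ z : ℂ, T ≤ z.re → p z = 0

/-- The inward flux of the vector field `tanh p ∇p = ∇ (log (cosh p))` through the vertical line
`re z = s`. -/
noncomputable def flux (R : ℝ) (p : ℂ → ℝ) (s : ℝ) : ℝ :=
  -∫ θ in -R..R, tanh (p ⟨s, θ⟩) * D 1 p ⟨s, θ⟩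

theorem contDiff_tanh {n : WithTop ℕ∞} : ContDiff ℝ n tanh := by
  rw [show tanh = fun x ↦ sinh x / cosh x from funext tanh_eq_sinh_div_cosh]
  exact contDiff_sinh.div contDiff_cosh fun x ↦ (cosh_pos x).ne'

namespace StripSubsolution

variable {x₀ T R s : ℝ} {a b : ℝ → ℝ} {p : ℂ → ℝ} (hp : StripSubsolution x₀ T R a b p)
include hp

theorem eq_zero {θ : ℝ} (hs : x₀ < s) (hθ : θ ∉ Ioo (a s) (b s)) : p ⟨s, θ⟩ = 0 :=
  (hp.eventuallyEq_zero ⟨s, θ⟩ hs hθ).eq_of_nhds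

theorem eq_zero_neg (hs : x₀ < s) : p ⟨s, -R⟩ = 0 :=
  hp.eq_zero hs fun h ↦ h.1.not_ge (hp.neg_le s)

theorem eq_zero_pos (hs : x₀ < s) : p ⟨s, R⟩ = 0 :=
  hp.eq_zero hs fun h ↦ h.2.not_ge (hp.le s)

theorem D_eq_zero {v : ℂ} {θ : ℝ} (hs : x₀ < s) (hθ : θ ∉ Ioo (a s) (b s)) : D v p ⟨s, θ⟩ = 0 := by
  rw [(D_congr (hp.eventuallyEq_zero ⟨s, θ⟩ hs hθ)).eq_of_nhds]
  simp [D]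

theorem neg_le_self : -R ≤ R :=
  (hp.neg_le 0).trans ((hp.lt 0).le.trans (hp.le 0))

theorem contDiffAt {z : ℂ} (hz : x₀ < z.re) : ContDiffAt ℝ 2 p z :=
  hp.contDiffOn.contDiffAt ((isOpen_rightHalfPlane x₀).mem_nhds hz)

theorem differentiableAt {z : ℂ} (hz : x₀ < z.re) : DifferentiableAt ℝ p z :=
  (hp.contDiffAt hz).differentiableAt two_ne_zero

theorem contDiffOn_D (v : ℂ) : ContDiffOn ℝ 1 (D v p) {z | x₀ < z.re} :=
  Carleman.contDiffOn_D hp.contDiffOn (isOpen_rightHalfPlane x₀) (by norm_num)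

theorem continuous_slice (hs : x₀ < s) : Continuous fun θ : ℝ ↦ p ⟨s, θ⟩ :=
  continuous_vertical hp.contDiffOn.continuousOn hs

theorem continuous_slice_D (hs : x₀ < s) (v : ℂ) : Continuous fun θ : ℝ ↦ D v p ⟨s, θ⟩ :=
  continuous_vertical (hp.contDiffOn_D v).continuousOn hs

theorem contDiffOn_tanh_mul_D (v : ℂ) :
    ContDiffOn ℝ 1 (fun z ↦ tanh (p z) * D v p z) {z | x₀ < z.re} :=
  (contDiff_tanh.comp_contDiffOn (hp.contDiffOn.of_le one_le_two)).mul (hp.contDiffOn_D v)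

theorem integral_eq_integral_strip {f : ℝ → ℝ} (hf : ∀ θ ∉ Ioo (a s) (b s), f θ = 0) :
    ∫ θ in -R..R, f θ = ∫ θ in a s..b s, f θ := by
  have hsupp : Function.support f ⊆ Ioo (a s) (b s) := fun θ hθ ↦ by_contra fun h ↦ hθ (hf θ h)
  rw [intervalIntegral.integral_eq_integral_of_support_subset
      (hsupp.trans ((Ioo_subset_Ioo (hp.neg_le s) (hp.le s)).trans Ioo_subset_Ioc_self)),
    intervalIntegral.integral_eq_integral_of_support_subset (hsupp.trans Ioo_subset_Ioc_self)]

theorem hasDerivAt_flux (hs : x₀ < s) :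
    HasDerivAt (flux R p)
      (-∫ θ in -R..R, (D 1 (fun z ↦ tanh (p z) * D 1 p z) ⟨s, θ⟩ +
        D I (fun z ↦ tanh (p z) * D I p z) ⟨s, θ⟩)) s :=
  (Carleman.hasDerivAt_flux (hp.contDiffOn_tanh_mul_D 1) (hp.contDiffOn_tanh_mul_D I) hs
    (by simp [hp.eq_zero_neg hs]) (by simp [hp.eq_zero_pos hs])).neg

theorem continuous_gradSq_slice (hs : x₀ < s) : Continuous fun θ : ℝ ↦ gradSq p ⟨s, θ⟩ :=
  ((hp.continuous_slice_D hs 1).pow 2).add ((hp.continuous_slice_D hs I).pow 2)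

theorem integral_gradSq_le (hs : x₀ < s) :
    ∫ θ in -R..R, gradSq p ⟨s, θ⟩ ≤ -deriv (flux R p) s := by
  have hcont {v : ℂ} : Continuous fun θ : ℝ ↦ D v (fun z ↦ tanh (p z) * D v p z) ⟨s, θ⟩ :=
    continuous_vertical (Carleman.contDiffOn_D (m := 0) (hp.contDiffOn_tanh_mul_D v)
      (isOpen_rightHalfPlane x₀) le_rfl).continuousOn hs
  rw [(hp.hasDerivAt_flux hs).deriv, neg_neg]
  refine intervalIntegral.integral_mono_on hp.neg_le_self
    ((hp.continuous_gradSq_slice hs).intervalIntegrable _ _)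
    ((hcont.add hcont).intervalIntegrable _ _) fun θ _ ↦ ?_
  have htanh : 0 ≤ tanh (p ⟨s, θ⟩) := tanh_nonneg (hp.nonneg _)
  have hΔ := mul_le_mul_of_nonneg_left (hp.le_laplacian ⟨s, θ⟩ hs) htanh
  rw [div_comp_mul_grad (hasDerivAt_tanh _) (hp.contDiffAt hs)]
  linear_combination hΔ - gradSq p ⟨s, θ⟩ * tanh_sq_eq (p ⟨s, θ⟩)

theorem exists_hasDerivAt_hardy_le (hs : x₀ < s) {g : ℂ → ℝ}
    (hg : ContDiffOn ℝ 2 g {z | x₀ < z.re}) (hpos : ∀ z : ℂ, x₀ < z.re → 0 < g z)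
    (hΔ : ∀ z : ℂ, x₀ < z.re → Δ g z ≤ 0) :
    ∃ d ≤ ∫ θ in -R..R, gradSq p ⟨s, θ⟩,
      HasDerivAt (fun r ↦ ∫ θ in -R..R, p ⟨r, θ⟩ ^ 2 / g ⟨r, θ⟩ * D 1 g ⟨r, θ⟩) d s := by
  have hopen := isOpen_rightHalfPlane x₀
  have hF (v : ℂ) : ContDiffOn ℝ 1 (fun z ↦ p z ^ 2 / g z * D v g z) {z | x₀ < z.re} :=
    (((hp.contDiffOn.of_le one_le_two).pow 2).div (hg.of_le one_le_two)
      fun z hz ↦ (hpos z hz).ne').mul (Carleman.contDiffOn_D hg hopen (by norm_num))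
  have hcont (v : ℂ) : Continuous fun θ : ℝ ↦ D v (fun z ↦ p z ^ 2 / g z * D v g z) ⟨s, θ⟩ :=
    continuous_vertical (Carleman.contDiffOn_D (m := 0) (hF v) hopen le_rfl).continuousOn hs
  refine ⟨_, intervalIntegral.integral_mono_on hp.neg_le_self
    (((hcont 1).add (hcont I)).intervalIntegrable _ _)
    ((hp.continuous_gradSq_slice hs).intervalIntegrable _ _) fun θ _ ↦
      div_sq_div_mul_grad_le (hp.differentiableAt (z := ⟨s, θ⟩) hs)
        (hg.contDiffAt (hopen.mem_nhds hs)) (hpos _ hs) (hΔ _ hs),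
    Carleman.hasDerivAt_flux (hF 1) (hF I) hs (by simp [hp.eq_zero_neg hs])
      (by simp [hp.eq_zero_pos hs])⟩

-- Hardy's inequality with the positive superharmonic weight `g`.
theorem neg_integral_le_flux (hs : x₀ < s) {g : ℂ → ℝ} (hg : ContDiffOn ℝ 2 g {z | s < z.re})
    (hpos : ∀ z : ℂ, s < z.re → 0 < g z) (hΔ : ∀ z : ℂ, s < z.re → Δ g z ≤ 0)
    (hcont : ContinuousOn (fun z ↦ p z ^ 2 / g z * D 1 g z) {z | s ≤ z.re}) :
    -∫ θ in -R..R, p ⟨s, θ⟩ ^ 2 / g ⟨s, θ⟩ * D 1 g ⟨s, θ⟩ ≤ flux R p s := by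
  have hp' : StripSubsolution s T R a b p :=
    { hp with
      contDiffOn := hp.contDiffOn.mono fun _ hz ↦ hs.trans hz
      le_laplacian := fun z hz ↦ hp.le_laplacian z (hs.trans hz)
      eventuallyEq_zero := fun z hz ↦ hp.eventuallyEq_zero z (hs.trans hz) }
  have hderiv {r : ℝ} (hr : r ∈ Ioi s) : ∃ d ≤ 0, HasDerivAt
      (fun r ↦ flux R p r + ∫ θ in -R..R, p ⟨r, θ⟩ ^ 2 / g ⟨r, θ⟩ * D 1 g ⟨r, θ⟩) d r := by
    obtain ⟨d, hd, hderiv⟩ := hp'.exists_hasDerivAt_hardy_le hr hg hpos hΔ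
    have henergy := hp'.integral_gradSq_le hr
    exact ⟨_, by linarith, (hp'.hasDerivAt_flux hr).differentiableAt.hasDerivAt.add hderiv⟩
  have hanti : AntitoneOn
      (fun r ↦ flux R p r + ∫ θ in -R..R, p ⟨r, θ⟩ ^ 2 / g ⟨r, θ⟩ * D 1 g ⟨r, θ⟩) (Ici s) := by
    refine antitoneOn_of_deriv_nonpos (convex_Ici s)
      (ContinuousOn.add (fun r hr ↦ ?_) (continuousOn_integral_vertical hcont _ _)) ?_ ?_
    · exact (hp.hasDerivAt_flux (hs.trans_le hr)).continuousAt.continuousWithinAt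
    all_goals
      rw [interior_Ici]
      intro r hr
      obtain ⟨d, hd, hderiv⟩ := hderiv hr
    · exact hderiv.differentiableAt.differentiableWithinAt
    · exact hderiv.deriv.trans_le hd
  have hlast := hanti self_mem_Ici (le_max_left s T) (le_max_left s T)
  have hzero (θ : ℝ) : p ⟨max s T, θ⟩ = 0 := hp.eq_zero_of_le _ (le_max_right s T)
  simp only [flux, hzero, tanh_zero, zero_mul, ne_eq, OfNat.ofNat_ne_zero, not_false_eq_true,
    zero_pow, zero_div, intervalIntegral.integral_zero, neg_zero, add_zero] at hlast
  rw [flux]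
  linarith

end StripSubsolution

section Barrier

/-- A positive harmonic function on the half-plane `re z > re c`, the weight in Hardy's inequality
for functions vanishing on `re z = re c`, `|im (z - c)| ≥ ℓ`: in the coordinate `w = (z - c) / ℓ` it
is `re (√(1 + w²) - w)`, which on the boundary line `re w = 0` equals `√(1 - (im w)²)` for
`|im w| < 1` and vanishes elsewhere. -/
noncomputable def barrier (c : ℂ) (ℓ : ℝ) (z : ℂ) : ℝ :=
  (Complex.sqrt (1 + ((z - c) / ℓ) ^ 2) - (z - c) / ℓ).re

variable {c v w z : ℂ} {ℓ : ℝ}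

theorem one_add_sq_mem_slitPlane (hw : w.re ≠ 0 ∨ |w.im| < 1) : 1 + w ^ 2 ∈ Complex.slitPlane := by
  have hre : (1 + w ^ 2).re = 1 + w.re ^ 2 - w.im ^ 2 := by simp [sq]; ring
  have him : (1 + w ^ 2).im = 2 * w.re * w.im := by simp [sq]; ring
  rw [Complex.mem_slitPlane_iff, hre, him]
  rcases hw with hw | hw
  · rcases eq_or_ne w.im 0 with h0 | h0
    · left; rw [h0]; nlinarith [sq_nonneg w.re]
    · right; positivity
  · left
    have := (sq_lt_one_iff_abs_lt_one w.im).2 hw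
    nlinarith

theorem re_sqrt_pos (hz : z ∈ Complex.slitPlane) : 0 < (Complex.sqrt z).re := by
  rw [Complex.sqrt, Complex.cpow_inv_two_re]
  refine Real.sqrt_pos.2 (half_pos ?_)
  rcases Complex.mem_slitPlane_iff.1 hz with h | h
  · positivity
  · have := Complex.abs_re_lt_norm.2 h
    linarith [neg_abs_le z.re]

theorem re_sqrt_one_add_sq_sub_pos (hw : 0 ≤ w.re) (hslit : 1 + w ^ 2 ∈ Complex.slitPlane) :
    0 < (Complex.sqrt (1 + w ^ 2) - w).re := by
  have hre : 0 < (Complex.sqrt (1 + w ^ 2) + w).re := by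
    rw [Complex.add_re]; exact add_pos_of_pos_of_nonneg (re_sqrt_pos hslit) hw
  have hsq : Complex.sqrt (1 + w ^ 2) ^ 2 = 1 + w ^ 2 :=
    Complex.cpow_nat_inv_pow _ two_ne_zero
  have hinv : Complex.sqrt (1 + w ^ 2) - w = (Complex.sqrt (1 + w ^ 2) + w)⁻¹ :=
    eq_inv_of_mul_eq_one_left (by linear_combination hsq)
  rw [hinv, Complex.inv_re]
  exact div_pos hre (Complex.normSq_pos.2 fun h ↦ hre.ne' (by simp [h]))

theorem D_re {F : ℂ → ℂ} {F' : ℂ} (hF : HasDerivAt F F' z) :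
    D v (fun z ↦ (F z).re) z = (F' * v).re := by
  have := (Complex.reCLM.hasFDerivAt.comp z (hF.hasFDerivAt.restrictScalars ℝ)).fderiv
  change fderiv ℝ (Complex.reCLM ∘ F) z v = _
  rw [this]
  simp [mul_comm]

theorem one_add_div_sq_mem_slitPlane (hℓ : 0 < ℓ) (hz : z.re ≠ c.re ∨ |z.im - c.im| < ℓ) :
    1 + ((z - c) / ℓ) ^ 2 ∈ Complex.slitPlane := by
  refine one_add_sq_mem_slitPlane (hz.imp (fun h ↦ ?_) fun h ↦ ?_)
  · rw [Complex.div_ofReal_re, Complex.sub_re]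
    exact div_ne_zero (sub_ne_zero.2 h) hℓ.ne'
  · rw [Complex.div_ofReal_im, Complex.sub_im, abs_div, abs_of_pos hℓ]
    exact (div_lt_one hℓ).2 h

theorem barrier_pos (hℓ : 0 < ℓ) (hre : c.re ≤ z.re) (hz : z.re ≠ c.re ∨ |z.im - c.im| < ℓ) :
    0 < barrier c ℓ z := by
  refine re_sqrt_one_add_sq_sub_pos ?_ (one_add_div_sq_mem_slitPlane hℓ hz)
  rw [Complex.div_ofReal_re, Complex.sub_re]
  exact div_nonneg (sub_nonneg.2 hre) hℓ.le

theorem harmonicAt_barrier (hℓ : 0 < ℓ) (hz : z.re ≠ c.re ∨ |z.im - c.im| < ℓ) :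
    HarmonicAt (barrier c ℓ) z := by
  have hw : AnalyticAt ℂ (fun z ↦ (z - c) / ℓ) z := by fun_prop (disch := simpa using hℓ.ne')
  exact (((analyticAt_const.add (hw.pow 2)).cpow analyticAt_const
    (one_add_div_sq_mem_slitPlane hℓ hz)).sub hw).harmonicAt_re

theorem sub_div_eq_ofReal_mul_I (hre : z.re = c.re) :
    (z - c) / ℓ = ((z.im - c.im) / ℓ : ℝ) * I := by
  apply Complex.ext <;> simp [hre]

theorem one_add_ofReal_mul_I_sq (y : ℝ) : 1 + (y * I) ^ 2 = ((1 - y ^ 2 : ℝ) : ℂ) := by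
  push_cast
  rw [mul_pow, Complex.I_sq]
  ring

theorem barrier_le_one_of_re_eq (hre : z.re = c.re) : barrier c ℓ z ≤ 1 := by
  rw [barrier, sub_div_eq_ofReal_mul_I hre, one_add_ofReal_mul_I_sq, Complex.sub_re,
    Complex.re_sqrt_ofReal]
  simpa using sq_nonneg ((z.im - c.im) / ℓ)

theorem D_barrier_of_re_eq (hℓ : 0 < ℓ) (hre : z.re = c.re) (him : |z.im - c.im| < ℓ) :
    D 1 (barrier c ℓ) z = -(1 / ℓ) := by
  have hslit := one_add_div_sq_mem_slitPlane hℓ (.inr him)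
  have hw : HasDerivAt (fun z ↦ (z - c) / ℓ) (1 / ℓ) z :=
    ((hasDerivAt_id z).sub_const c).div_const _
  have hpow : ((1 - ((z.im - c.im) / ℓ) ^ 2 : ℝ) : ℂ) ^ (-1 / 2 : ℂ) =
      ((1 - ((z.im - c.im) / ℓ) ^ 2) ^ (-1 / 2 : ℝ) : ℝ) := by
    rw [Complex.ofReal_cpow]
    · push_cast; rfl
    · rw [sub_nonneg, sq_le_one_iff_abs_le_one, abs_div, abs_of_pos hℓ]
      exact ((div_lt_one hℓ).2 him).le
  have hderiv := D_re (v := 1)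
    (((Complex.hasDerivAt_sqrt hslit).comp z ((hw.pow 2).const_add 1)).sub hw)
  refine hderiv.trans ?_
  rw [sub_div_eq_ofReal_mul_I hre, one_add_ofReal_mul_I_sq, hpow, ← Complex.ofReal_one,
    ← Complex.ofReal_div]
  simp

end Barrier

theorem mem_Ioo_iff_abs_sub_midpoint_lt {a b θ : ℝ} :
    θ ∈ Ioo a b ↔ |θ - (a + b) / 2| < (b - a) / 2 := by
  rw [abs_lt, mem_Ioo]
  constructor <;> rintro ⟨h₁, h₂⟩ <;> constructor <;> linarith

namespace StripSubsolution

variable {x₀ T R s ℓ : ℝ} {a b : ℝ → ℝ} {c : ℂ} {p : ℂ → ℝ} (hp : StripSubsolution x₀ T R a b p)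
include hp

theorem continuousOn_barrier_flux (hc : x₀ < c.re) (hℓ : 0 < ℓ)
    (hab : ∀ θ, θ ∈ Ioo (a c.re) (b c.re) ↔ |θ - c.im| < ℓ) :
    ContinuousOn (fun z ↦ p z ^ 2 / barrier c ℓ z * D 1 (barrier c ℓ) z) {z | c.re ≤ z.re} := by
  intro z (hz : c.re ≤ z.re)
  refine ContinuousAt.continuousWithinAt ?_
  by_cases him : z.re ≠ c.re ∨ |z.im - c.im| < ℓ
  · have hharm := harmonicAt_barrier hℓ him
    exact (((hp.differentiableAt (hc.trans_le hz)).continuousAt.pow 2).div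
      hharm.1.continuousAt (barrier_pos hℓ hz him).ne').mul
      (contDiffAt_D (m := 0) hharm.1 (by norm_num)).continuousAt
  · push Not at him
    have hzero : p =ᶠ[𝓝 z] 0 := hp.eventuallyEq_zero z (hc.trans_le hz) <| by
      rw [him.1, hab]
      exact him.2.not_gt
    refine (continuousAt_const (y := (0 : ℝ))).congr (hzero.mono fun w hw ↦ ?_)
    simp [hw]

theorem sq_div_le_barrier_flux (hc : x₀ < c.re) (hℓ : 0 < ℓ)
    (hab : ∀ θ, θ ∈ Ioo (a c.re) (b c.re) ↔ |θ - c.im| < ℓ) (θ : ℝ) :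
    p ⟨c.re, θ⟩ ^ 2 / ℓ ≤
      -(p ⟨c.re, θ⟩ ^ 2 / barrier c ℓ ⟨c.re, θ⟩ * D 1 (barrier c ℓ) ⟨c.re, θ⟩) := by
  by_cases hθ : θ ∈ Ioo (a c.re) (b c.re)
  · have him : |θ - c.im| < ℓ := (hab θ).1 hθ
    have hpos : 0 < barrier c ℓ ⟨c.re, θ⟩ := barrier_pos hℓ le_rfl (.inr him)
    rw [D_barrier_of_re_eq (z := ⟨c.re, θ⟩) (c := c) hℓ rfl him, mul_neg, neg_neg,
      ← div_eq_mul_one_div]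
    gcongr
    exact le_div_self (sq_nonneg _) hpos (barrier_le_one_of_re_eq rfl)
  · simp [hp.eq_zero hc hθ]

theorem two_mul_integral_sq_le (hs : x₀ < s) :
    2 * ∫ θ in a s..b s, p ⟨s, θ⟩ ^ 2 ≤ (b s - a s) * flux R p s := by
  set c : ℂ := ⟨s, (a s + b s) / 2⟩
  set ℓ := (b s - a s) / 2
  have hℓ : 0 < ℓ := half_pos (sub_pos.2 (hp.lt s))
  have hab : ∀ θ, θ ∈ Ioo (a c.re) (b c.re) ↔ |θ - c.im| < ℓ :=
    fun θ ↦ mem_Ioo_iff_abs_sub_midpoint_lt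
  have hharm {z : ℂ} (hz : s < z.re) : HarmonicAt (barrier c ℓ) z :=
    harmonicAt_barrier hℓ (.inl hz.ne')
  have hcont := hp.continuousOn_barrier_flux hs hℓ hab
  have hhardy : -∫ θ in -R..R, p ⟨s, θ⟩ ^ 2 / barrier c ℓ ⟨s, θ⟩ * D 1 (barrier c ℓ) ⟨s, θ⟩ ≤
      flux R p s := hp.neg_integral_le_flux hs (fun z hz ↦ (hharm hz).1.contDiffWithinAt)
    (fun z hz ↦ barrier_pos hℓ hz.le (.inl hz.ne')) (fun z hz ↦ (hharm hz).2.eq_of_nhds.le) hcont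
  have hlower : (∫ θ in -R..R, p ⟨s, θ⟩ ^ 2) / ℓ ≤ flux R p s := by
    refine le_trans ?_ hhardy
    rw [← intervalIntegral.integral_div, ← intervalIntegral.integral_neg]
    refine intervalIntegral.integral_mono_on hp.neg_le_self
      ((((hp.continuous_slice hs).pow 2).div_const ℓ).intervalIntegrable _ _)
      (Continuous.intervalIntegrable (Continuous.neg ?_) _ _)
      fun θ _ ↦ hp.sq_div_le_barrier_flux hs hℓ hab θ
    exact hcont.comp_continuous (f := fun θ : ℝ ↦ (⟨s, θ⟩ : ℂ)) (by fun_prop) fun _ ↦ le_refl s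
  rw [hp.integral_eq_integral_strip fun θ hθ ↦ by simp [hp.eq_zero hs hθ], div_le_iff₀ hℓ]
    at hlower
  linear_combination 2 * hlower

end StripSubsolution

section MaximumPrinciple

variable {f : ℂ → ℝ} {z : ℂ}

theorem second_deriv_nonpos_of_isLocalMax {g g' : ℝ → ℝ} {g'' x : ℝ}
    (hg : ∀ᶠ y in 𝓝 x, HasDerivAt g (g' y) y) (hg' : HasDerivAt g' g'' x)
    (hmax : IsLocalMax g x) : g'' ≤ 0 := by
  by_contra! hpos
  have hderiv : deriv g =ᶠ[𝓝 x] g' := hg.mono fun y hy ↦ hy.deriv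
  have hmin : IsLocalMin g x := isLocalMin_of_deriv_deriv_pos
    (by rwa [hderiv.deriv_eq, hg'.deriv]) hmax.deriv_eq_zero hg.self_of_nhds.continuousAt
  have hconst : g =ᶠ[𝓝 x] fun _ ↦ g x := by
    filter_upwards [hmax, hmin] with y h₁ h₂ using le_antisymm h₁ h₂
  have hzero : g'' = 0 := by
    rw [← hg'.deriv, ← hderiv.deriv_eq, hconst.deriv.deriv_eq]
    simp
  exact hpos.ne' hzero

theorem laplacian_nonpos_of_isLocalMax (hf : ContDiffAt ℝ 2 f z) (hmax : IsLocalMax f z) :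
    Δ f z ≤ 0 := by
  have hdiff : ∀ᶠ w in 𝓝 z, DifferentiableAt ℝ f w :=
    (hf.eventually (by simp)).mono fun w hw ↦ hw.differentiableAt two_ne_zero
  have hDdiff (v : ℂ) : DifferentiableAt ℝ (D v f) z :=
    (contDiffAt_D hf (m := 1) (by norm_num)).differentiableAt one_ne_zero
  have hre : Tendsto (fun t : ℝ ↦ (⟨t, z.im⟩ : ℂ)) (𝓝 z.re) (𝓝 z) :=
    (by fun_prop : Continuous fun t : ℝ ↦ (⟨t, z.im⟩ : ℂ)).tendsto z.re
  have him : Tendsto (fun t : ℝ ↦ (⟨z.re, t⟩ : ℂ)) (𝓝 z.im) (𝓝 z) :=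
    (by fun_prop : Continuous fun t : ℝ ↦ (⟨z.re, t⟩ : ℂ)).tendsto z.im
  rw [laplacian_eq hf]
  exact add_nonpos
    (second_deriv_nonpos_of_isLocalMax ((hre.eventually hdiff).mono fun t ↦ hasDerivAt_horizontal)
      (hasDerivAt_horizontal (hDdiff 1)) (hre.eventually hmax))
    (second_deriv_nonpos_of_isLocalMax ((him.eventually hdiff).mono fun t ↦ hasDerivAt_vertical)
      (hasDerivAt_vertical (hDdiff I)) (him.eventually hmax))

theorem laplacian_mul_re_sq (ε : ℝ) (z : ℂ) : Δ (fun w : ℂ ↦ ε * w.re ^ 2) z = 2 * ε := by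
  have hre : ContDiff ℝ 2 Complex.re := Complex.reCLM.contDiff
  have hD (v : ℂ) : D v Complex.re z = v.re := congrArg (· v) Complex.reCLM.fderiv
  have hharm : Δ Complex.re z = 0 :=
    (analyticAt_id (𝕜 := ℂ)).harmonicAt_re.2.eq_of_nhds
  have hφ (x : ℝ) : HasDerivAt (fun y ↦ ε * y ^ 2) (2 * ε * x) x :=
    ((hasDerivAt_pow 2 x).const_mul ε).congr_deriv (by push_cast; ring)
  rw [laplacian_comp (.of_forall hφ) (((hasDerivAt_id _).const_mul _)) (by fun_prop)
    hre.contDiffAt, gradSq, hD, hD, hharm]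
  simp

theorem le_of_forall_mem_frontier_le {K : Set ℂ} {M : ℝ} (hK : IsCompact K)
    (hcont : ContinuousOn f K) (hf : ∀ w ∈ interior K, ContDiffAt ℝ 2 f w)
    (hΔ : ∀ w ∈ interior K, 0 ≤ Δ f w) (hM : ∀ w ∈ frontier K, f w ≤ M) (hz : z ∈ K) :
    f z ≤ M := by
  obtain ⟨C, hC⟩ := hK.exists_bound_of_continuousOn
    (f := fun w : ℂ ↦ w.re ^ 2) (Complex.continuous_re.pow 2).continuousOn
  have hC₀ : 0 ≤ C := (norm_nonneg _).trans (hC z hz)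
  suffices h : ∀ ε > 0, f z ≤ M + ε * C by
    refine le_of_forall_pos_le_add fun δ hδ ↦ (h (δ / (C + 1)) (by positivity)).trans ?_
    gcongr
    rw [div_mul_eq_mul_div, div_le_iff₀ (by positivity)]
    linarith
  intro ε hε
  have hsq : ContDiff ℝ 2 fun w : ℂ ↦ ε * w.re ^ 2 :=
    contDiff_const.mul (Complex.reCLM.contDiff.pow 2)
  obtain ⟨w, hwK, hmax⟩ := hK.exists_isMaxOn ⟨z, hz⟩ (hcont.add hsq.continuous.continuousOn)
  have hw : w ∉ interior K := fun hw ↦ by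
    have := laplacian_nonpos_of_isLocalMax ((hf w hw).add hsq.contDiffAt)
      (hmax.isLocalMax (mem_interior_iff_mem_nhds.1 hw))
    have hadd := (hf w hw).laplacian_add hsq.contDiffAt
    rw [laplacian_mul_re_sq] at hadd
    change Δ (f + fun w : ℂ ↦ ε * w.re ^ 2) w ≤ 0 at this
    linarith [hΔ w hw]
  calc f z ≤ f z + ε * z.re ^ 2 := le_add_of_nonneg_right (by positivity)
    _ ≤ f w + ε * w.re ^ 2 := hmax hz
    _ ≤ M + ε * C := by
      gcongr
      · exact hM w (hK.isClosed.frontier_eq ▸ ⟨hwK, hw⟩)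
      · exact (le_abs_self _).trans (hC w hwK)

end MaximumPrinciple

namespace StripSubsolution

variable {x₀ T R s t θ : ℝ} {a b : ℝ → ℝ} {p : ℂ → ℝ} (hp : StripSubsolution x₀ T R a b p)
include hp

theorem exists_le (hs : x₀ < s) (hst : s ≤ t) (hpos : 0 < p ⟨t, θ⟩) :
    ∃ m ∈ Ioo (a s) (b s), p ⟨t, θ⟩ ≤ p ⟨s, m⟩ := by
  obtain ⟨m, -, hm⟩ := isCompact_Icc.exists_isMaxOn (nonempty_Icc.2 hp.neg_le_self)
    (hp.continuous_slice hs).continuousOn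
  have hright {z : ℂ} (hz : z ∈ Icc s (max T t) ×ℂ Icc (-R) R) : x₀ < z.re := hs.trans_le hz.1.1
  have hint : interior (Icc s (max T t) ×ℂ Icc (-R) R) ⊆ _ := interior_subset
  have hmem : (⟨t, θ⟩ : ℂ) ∈ Icc s (max T t) ×ℂ Icc (-R) R := by
    refine ⟨⟨hst, le_max_right T t⟩, ?_⟩
    by_contra hθ
    refine hpos.ne' (hp.eq_zero (hs.trans_le hst) fun h ↦ hθ ?_)
    exact ⟨(hp.neg_le t).trans h.1.le, h.2.le.trans (hp.le t)⟩
  have hle : p ⟨t, θ⟩ ≤ p ⟨s, m⟩ := by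
    refine le_of_forall_mem_frontier_le (isCompact_Icc.reProdIm isCompact_Icc)
      (fun z hz ↦ (hp.differentiableAt (hright hz)).continuousAt.continuousWithinAt)
      (fun z hz ↦ hp.contDiffAt (hright (hint hz))) (fun z hz ↦ ?_) (fun z hz ↦ ?_) hmem
    · exact (mul_nonneg (tanh_nonneg (hp.nonneg z)) (by rw [gradSq]; positivity)).trans
        (hp.le_laplacian z (hright (hint hz)))
    · have hz' := hright ((isCompact_Icc.reProdIm isCompact_Icc).isClosed.frontier_subset hz)
      rw [Complex.frontier_reProdIm, frontier_Icc hp.neg_le_self,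
        frontier_Icc (hst.trans (le_max_right T t)), closure_Icc, closure_Icc] at hz
      obtain ⟨x, y⟩ := z
      rcases hz with ⟨-, rfl | rfl⟩ | ⟨rfl | rfl, hy⟩
      · exact (hp.eq_zero_neg hz').trans_le (hp.nonneg _)
      · exact (hp.eq_zero_pos hz').trans_le (hp.nonneg _)
      · exact hm hy
      · exact (hp.eq_zero_of_le _ (le_max_left T t)).trans_le (hp.nonneg _)
  exact ⟨m, by_contra fun h ↦ (hpos.trans_le hle).ne' (hp.eq_zero hs h), hle⟩

end StripSubsolution

theorem sq_add_two_mul_le {A B N L Y c : ℝ} (hA : 0 ≤ A) (hB : 0 ≤ B) (hN : 0 ≤ N) (hL : 0 ≤ L)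
    (hc : c ≠ 0) (hN' : c ^ 2 * N ≤ L * A * (L - N)) (hY : Y ^ 2 ≤ N * B) :
    Y ^ 2 + 2 * c * Y ≤ L * (A + B) := by
  rcases hN.eq_or_lt with rfl | hN
  · obtain rfl : Y = 0 := by nlinarith
    nlinarith [mul_nonneg hL (add_nonneg hA hB)]
  have hNL : 0 < L - N :=
    pos_of_mul_pos_right ((by positivity : 0 < c ^ 2 * N).trans_le hN') (mul_nonneg hL hA)
  have hLA : c ^ 2 * N / (L - N) ≤ L * A := (div_le_iff₀ hNL).2 hN'
  have hLB : L * (Y ^ 2 / N) ≤ L * B :=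
    mul_le_mul_of_nonneg_left ((div_le_iff₀ hN).2 (by linarith)) hL
  have hamgm : 2 * c * Y ≤ c ^ 2 * N / (L - N) + Y ^ 2 * (L - N) / N := by
    rw [div_add_div _ _ hNL.ne' hN.ne', le_div_iff₀ (mul_pos hNL hN)]
    nlinarith [sq_nonneg (c * N - Y * (L - N))]
  have hsplit : L * (Y ^ 2 / N) = Y ^ 2 + Y ^ 2 * (L - N) / N := by
    field_simp
    ring
  linarith

namespace StripSubsolution

variable {x₀ T R s t θ m : ℝ} {a b : ℝ → ℝ} {p : ℂ → ℝ} (hp : StripSubsolution x₀ T R a b p)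
include hp

theorem hasDerivAt_slice (hs : x₀ < s) (θ : ℝ) :
    HasDerivAt (fun θ : ℝ ↦ p ⟨s, θ⟩) (D I p ⟨s, θ⟩) θ :=
  hasDerivAt_vertical (hp.differentiableAt (z := ⟨s, θ⟩) hs)

theorem eq_zero_left (hs : x₀ < s) : p ⟨s, a s⟩ = 0 := hp.eq_zero hs left_notMem_Ioo

theorem eq_zero_right (hs : x₀ < s) : p ⟨s, b s⟩ = 0 := hp.eq_zero hs right_notMem_Ioo

theorem integral_sq_D_add_le (hs : x₀ < s) :
    (∫ θ in a s..b s, D I p ⟨s, θ⟩ ^ 2) + ∫ θ in a s..b s, D 1 p ⟨s, θ⟩ ^ 2 ≤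
      -deriv (flux R p) s := by
  have hint (v : ℂ) : IntervalIntegrable (fun θ : ℝ ↦ D v p ⟨s, θ⟩ ^ 2) volume (a s) (b s) :=
    ((hp.continuous_slice_D hs v).pow 2).intervalIntegrable _ _
  rw [add_comm, ← intervalIntegral.integral_add (hint 1) (hint I)]
  refine le_of_eq_of_le (hp.integral_eq_integral_strip fun θ hθ ↦ ?_).symm
    (hp.integral_gradSq_le hs)
  simp [hp.D_eq_zero hs hθ]

theorem sq_flux_le (hs : x₀ < s) :
    flux R p s ^ 2 ≤
      (∫ θ in a s..b s, tanh (p ⟨s, θ⟩) ^ 2) * ∫ θ in a s..b s, D 1 p ⟨s, θ⟩ ^ 2 := by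
  rw [flux, neg_sq, hp.integral_eq_integral_strip fun θ hθ ↦ by simp [hp.eq_zero hs hθ]]
  exact sq_integral_mul_le (hp.lt s).le (continuous_tanh.comp (hp.continuous_slice hs))
    (hp.continuous_slice_D hs 1)

theorem integral_tanh_sq_le (hs : x₀ < s) :
    ∫ θ in a s..b s, tanh (p ⟨s, θ⟩) ^ 2 ≤ ∫ θ in a s..b s, p ⟨s, θ⟩ ^ 2 := by
  have hcont := hp.continuous_slice hs
  refine intervalIntegral.integral_mono_on (hp.lt s).le
    (((continuous_tanh.comp hcont).pow 2).intervalIntegrable _ _)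
    ((hcont.pow 2).intervalIntegrable _ _) fun θ _ ↦ ?_
  have := tanh_nonneg (hp.nonneg ⟨s, θ⟩)
  gcongr
  exact tanh_le_self (hp.nonneg _)

theorem flux_pos (hs : x₀ < s) (hpos : 0 < p ⟨s, m⟩) : 0 < flux R p s := by
  have hm : m ∈ Ioo (a s) (b s) := by_contra fun h ↦ hpos.ne' (hp.eq_zero hs h)
  have hP : 0 < ∫ θ in a s..b s, p ⟨s, θ⟩ ^ 2 :=
    intervalIntegral.integral_pos (hp.lt s) ((hp.continuous_slice hs).pow 2).continuousOn
      (fun _ _ ↦ sq_nonneg _) ⟨m, Ioo_subset_Icc_self hm, by positivity⟩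
  exact pos_of_mul_pos_right ((mul_pos two_pos hP).trans_le (hp.two_mul_integral_sq_le hs))
    (sub_pos.2 (hp.lt s)).le

theorem sq_flux_add_le (hs : x₀ < s) :
    flux R p s ^ 2 + 2 * π * flux R p s ≤ (b s - a s) * -deriv (flux R p) s := by
  have hL : 0 ≤ b s - a s := (sub_pos.2 (hp.lt s)).le
  have hnonneg (f : ℝ → ℝ) : 0 ≤ ∫ θ in a s..b s, f θ ^ 2 :=
    intervalIntegral.integral_nonneg (hp.lt s).le fun _ _ ↦ sq_nonneg _
  refine (sq_add_two_mul_le (hnonneg _) (hnonneg _) (hnonneg _) hL pi_ne_zero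
    (pi_sq_mul_integral_tanh_sq_le (hp.lt s).le (hp.hasDerivAt_slice hs)
      (hp.continuous_slice_D hs I) (hp.eq_zero_left hs) (hp.eq_zero_right hs)
      fun _ ↦ hp.nonneg _) (hp.sq_flux_le hs)).trans ?_
  gcongr
  exact hp.integral_sq_D_add_le hs

theorem two_mul_flux_le (hs : x₀ < s) :
    2 * flux R p s ≤ (b s - a s) * ∫ θ in a s..b s, D 1 p ⟨s, θ⟩ ^ 2 := by
  have hB : 0 ≤ ∫ θ in a s..b s, D 1 p ⟨s, θ⟩ ^ 2 :=
    intervalIntegral.integral_nonneg (hp.lt s).le fun _ _ ↦ sq_nonneg _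
  have hsq := (hp.sq_flux_le hs).trans
    (mul_le_mul_of_nonneg_right (hp.integral_tanh_sq_le hs) hB)
  have hfloor := mul_le_mul_of_nonneg_right (hp.two_mul_integral_sq_le hs) hB
  rcases le_or_gt (flux R p s) 0 with hY | hY
  · nlinarith [mul_nonneg (sub_pos.2 (hp.lt s)).le hB]
  · refine le_of_mul_le_mul_right ?_ hY
    linarith

theorem two_mul_flux_add_four_mul_sq_le (hs : x₀ < s) (hm : m ∈ Ioo (a s) (b s)) :
    2 * flux R p s + 4 * p ⟨s, m⟩ ^ 2 ≤ (b s - a s) * -deriv (flux R p) s := by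
  have hA := four_mul_sq_le_mul_integral_sq (hp.hasDerivAt_slice hs) (hp.continuous_slice_D hs I)
    (hp.eq_zero_left hs) (hp.eq_zero_right hs) (Ioo_subset_Icc_self hm)
  have hL := mul_le_mul_of_nonneg_left (hp.integral_sq_D_add_le hs) (sub_pos.2 (hp.lt s)).le
  linarith [hp.two_mul_flux_le hs]

theorem two_mul_flux_add_pow_four_div_le (hs : x₀ < s) (hm : m ∈ Ioo (a s) (b s))
    (hY : 0 < flux R p s) :
    2 * flux R p s + 2 * p ⟨s, m⟩ ^ 4 / flux R p s ≤ (b s - a s) * -deriv (flux R p) s := by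
  have hA : 2 * p ⟨s, m⟩ ^ 4 / flux R p s ≤
      (b s - a s) * ∫ θ in a s..b s, D I p ⟨s, θ⟩ ^ 2 := by
    rw [div_le_iff₀ hY]
    have hpow := pow_four_le_integral_sq_mul_integral_sq (hp.hasDerivAt_slice hs)
      (hp.continuous_slice_D hs I) (hp.eq_zero_left hs) (hp.eq_zero_right hs)
      (Ioo_subset_Icc_self hm)
    have hfloor := mul_le_mul_of_nonneg_right (hp.two_mul_integral_sq_le hs)
      (intervalIntegral.integral_nonneg (μ := volume) (f := fun θ ↦ D I p ⟨s, θ⟩ ^ 2) (hp.lt s).le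
        fun _ _ ↦ sq_nonneg _)
    linarith
  have hL := mul_le_mul_of_nonneg_left (hp.integral_sq_D_add_le hs) (sub_pos.2 (hp.lt s)).le
  linarith [hp.two_mul_flux_le hs]

end StripSubsolution

section Ode

/-- A positive flux `Y` through the lines `re z = r`, `s ≤ r ≤ t`, of a strip of width `L`, where
`Λ` is a primitive of `1 / L`, subject to three lower bounds for its rate of decay. The number `q`
stands for the square of a value attained in the strip. -/
structure FluxDecay (q : ℝ) (Y Y' L Λ : ℝ → ℝ) (s t : ℝ) : Prop where
  hasDerivAt : ∀ r ∈ Icc s t, HasDerivAt Y (Y' r) r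
  pos : ∀ r ∈ Icc s t, 0 < Y r
  width_pos : ∀ r ∈ Icc s t, 0 < L r
  hasDerivAt_primitive : ∀ r ∈ Icc s t, HasDerivAt Λ (1 / L r) r
  le_of_large : ∀ r ∈ Icc s t, Y r ^ 2 + 2 * π * Y r ≤ L r * -Y' r
  le_of_medium : ∀ r ∈ Icc s t, 2 * Y r + 4 * q ≤ L r * -Y' r
  le_of_small : ∀ r ∈ Icc s t, 2 * Y r + 2 * q ^ 2 / Y r ≤ L r * -Y' r

namespace FluxDecay

variable {s t u v q : ℝ} {Y Y' L Λ F G : ℝ → ℝ}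

theorem mono (h : FluxDecay q Y Y' L Λ s t) (hsub : Icc u v ⊆ Icc s t) :
    FluxDecay q Y Y' L Λ u v where
  hasDerivAt r hr := h.hasDerivAt r (hsub hr)
  pos r hr := h.pos r (hsub hr)
  width_pos r hr := h.width_pos r (hsub hr)
  hasDerivAt_primitive r hr := h.hasDerivAt_primitive r (hsub hr)
  le_of_large r hr := h.le_of_large r (hsub hr)
  le_of_medium r hr := h.le_of_medium r (hsub hr)
  le_of_small r hr := h.le_of_small r (hsub hr)

variable (h : FluxDecay q Y Y' L Λ s t) (hst : s ≤ t)
include h hst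

theorem sub_le_sub (hF : ∀ y, 0 < y → HasDerivAt F (-(1 / G y)) y) (hG : ∀ y, 0 < y → 0 < G y)
    (hle : ∀ r ∈ Icc s t, G (Y r) ≤ L r * -Y' r) : Λ t - Λ s ≤ F (Y t) - F (Y s) := by
  have hderiv : ∀ r ∈ Icc s t, HasDerivAt (fun r ↦ F (Y r) - Λ r)
      (-(1 / G (Y r)) * Y' r - 1 / L r) r := fun r hr ↦
    ((hF (Y r) (h.pos r hr)).comp r (h.hasDerivAt r hr)).sub (h.hasDerivAt_primitive r hr)
  have hmono : MonotoneOn (fun r ↦ F (Y r) - Λ r) (Icc s t) := by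
    refine monotoneOn_of_hasDerivWithinAt_nonneg (convex_Icc s t)
      (fun r hr ↦ (hderiv r hr).continuousAt.continuousWithinAt)
      (fun r hr ↦ (hderiv r (interior_subset hr)).hasDerivWithinAt) fun r hr ↦ ?_
    have hr := interior_subset hr
    have hGr := hG _ (h.pos r hr)
    have hLr := h.width_pos r hr
    rw [show -(1 / G (Y r)) * Y' r - 1 / L r = (L r * -Y' r - G (Y r)) / (G (Y r) * L r) by
      field_simp]
    exact div_nonneg (sub_nonneg.2 (hle r hr)) (mul_pos hGr hLr).le
  have := hmono (left_mem_Icc.2 hst) (right_mem_Icc.2 hst) hst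
  linarith

theorem sub_le_log_one_add : Λ t - Λ s ≤ 1 / (2 * π) * log (1 + 2 * π / Y t) := by
  have hstep := h.sub_le_sub hst (F := fun y ↦ 1 / (2 * π) * log (1 + 2 * π / y))
    (G := fun y ↦ y ^ 2 + 2 * π * y) (fun y hy ↦ ?_) (fun y hy ↦ by positivity) h.le_of_large
  · have hs := h.pos s (left_mem_Icc.2 hst)
    have hlog : 0 ≤ 1 / (2 * π) * log (1 + 2 * π / Y s) :=
      mul_nonneg (by positivity) (log_nonneg (le_add_of_nonneg_right (by positivity)))
    linarith
  · have hlog := (((hasDerivAt_inv hy.ne').const_mul (2 * π)).const_add 1).log (by positivity)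
    refine (hlog.const_mul (1 / (2 * π))).congr_deriv ?_
    field_simp

theorem sub_le_log_div (hq : 0 < q) :
    Λ t - Λ s ≤ 1 / 2 * log ((2 * Y s + 4 * q) / (2 * Y t + 4 * q)) := by
  have hstep := h.sub_le_sub hst (F := fun y ↦ -(1 / 2 * log (2 * y + 4 * q)))
    (G := fun y ↦ 2 * y + 4 * q) (fun y hy ↦ ?_) (fun y hy ↦ by positivity) h.le_of_medium
  · have hs := h.pos s (left_mem_Icc.2 hst)
    have ht := h.pos t (right_mem_Icc.2 hst)
    rw [log_div (by positivity) (by positivity)]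
    linarith
  · have hlog := (((hasDerivAt_id' y).const_mul 2).add_const (4 * q)).log (by positivity)
    refine (hlog.const_mul (1 / 2)).neg.congr_deriv ?_
    field_simp

theorem sub_le_log_sq_div (hq : 0 < q) :
    Λ t - Λ s ≤ 1 / 4 * log ((Y s ^ 2 + q ^ 2) / q ^ 2) := by
  have hstep := h.sub_le_sub hst (F := fun y ↦ -(1 / 4 * log (y ^ 2 + q ^ 2)))
    (G := fun y ↦ 2 * y + 2 * q ^ 2 / y) (fun y hy ↦ ?_) (fun y hy ↦ by positivity) h.le_of_small
  · have hlast : log (q ^ 2) ≤ log (Y t ^ 2 + q ^ 2) := by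
      gcongr
      exact le_add_of_nonneg_left (sq_nonneg _)
    rw [log_div (by positivity) (by positivity)]
    linarith
  · have hlog := ((hasDerivAt_pow 2 y).add_const (q ^ 2)).log (by positivity)
    refine (hlog.const_mul (1 / 4)).neg.congr_deriv ?_
    field_simp
    ring

theorem exists_crossing (y : ℝ) : ∃ c ∈ Icc s t, (y ≤ Y c ∨ c = s) ∧ (Y c ≤ y ∨ c = t) := by
  by_cases hs : Y s ≤ y
  · exact ⟨s, left_mem_Icc.2 hst, .inr rfl, .inl hs⟩
  by_cases ht : y ≤ Y t
  · exact ⟨t, right_mem_Icc.2 hst, .inl ht, .inr rfl⟩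
  push Not at hs ht
  obtain ⟨c, hc, rfl⟩ := intermediate_value_Icc' hst
    (fun r hr ↦ (h.hasDerivAt r hr).continuousAt.continuousWithinAt) ⟨ht.le, hs.le⟩
  exact ⟨c, hc, .inl le_rfl, .inl le_rfl⟩

-- `Y` decreases through the ranges `[14/15 q, ∞)`, `[q/2, 14/15 q]`, `(0, q/2]`, and in each of
-- them a different one of the three decay estimates is used. The breakpoint `14/15` is tuned so
-- that the final constant stays below `4`.
theorem sub_le (hq : 0 < q) :
    Λ t - Λ s ≤ 1 / (2 * π) * log (1 + 2 * π / (14 / 15 * q)) + 1 / 2 * log (88 / 75) +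
      1 / 4 * log (5 / 4) := by
  obtain ⟨c, hc, hcs, hct⟩ := h.exists_crossing hst (14 / 15 * q)
  have h' := h.mono (Icc_subset_Icc_left hc.1)
  obtain ⟨d, hd, hdc, hdt⟩ := h'.exists_crossing hc.2 (1 / 2 * q)
  have hYc := h.pos c hc
  have hYd := h'.pos d hd
  have hhigh : Λ c - Λ s ≤ 1 / (2 * π) * log (1 + 2 * π / (14 / 15 * q)) := by
    rcases hcs with hcs | rfl
    · refine ((h.mono (Icc_subset_Icc_right hc.2)).sub_le_log_one_add hc.1).trans ?_
      gcongr
    · rw [sub_self]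
      exact mul_nonneg (by positivity) (log_nonneg (le_add_of_nonneg_right (by positivity)))
  have hmid : Λ d - Λ c ≤ 1 / 2 * log (88 / 75) := by
    have hlog := (h'.mono (Icc_subset_Icc_right hd.2)).sub_le_log_div hd.1 hq
    by_cases hcd : d = c
    · rw [hcd, sub_self]
      exact mul_nonneg (by norm_num) (log_nonneg (by norm_num))
    · have hct := hct.resolve_right fun hct ↦ hcd (le_antisymm (hct ▸ hd.2) hd.1)
      have hdc := hdc.resolve_right hcd
      refine hlog.trans (mul_le_mul_of_nonneg_left (log_le_log (by positivity) ?_) (by norm_num))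
      rw [div_le_div_iff₀ (by positivity) (by norm_num)]
      linarith
  have hlow : Λ t - Λ d ≤ 1 / 4 * log (5 / 4) := by
    rcases hdt with hdt | rfl
    · refine ((h'.mono (Icc_subset_Icc_left hd.1)).sub_le_log_sq_div hd.2 hq).trans
        (mul_le_mul_of_nonneg_left (log_le_log (by positivity) ?_) (by norm_num))
      rw [div_le_div_iff₀ (by positivity) (by norm_num)]
      nlinarith
    · rw [sub_self]
      exact mul_nonneg (by norm_num) (log_nonneg (by norm_num))
  linarith

end FluxDecay

end Ode

section Gudermannian

theorem one_add_sq_div_two_le_cosh {x : ℝ} (hx : 0 ≤ x) : 1 + x ^ 2 / 2 ≤ cosh x := by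
  have hsinh : x / 2 ≤ sinh (x / 2) := self_le_sinh_iff.2 (by positivity)
  rw [show x = 2 * (x / 2) by ring, cosh_two_mul, cosh_sq]
  nlinarith

theorem one_add_sq_div_two_add_pow_four_div_le_cosh {x : ℝ} (hx : 0 ≤ x) :
    1 + x ^ 2 / 2 + x ^ 4 / 32 ≤ cosh x := by
  have hcosh := one_add_sq_div_two_le_cosh (x := x / 2) (by positivity)
  rw [show x = 2 * (x / 2) by ring, cosh_two_mul, sinh_sq]
  nlinarith [sq_nonneg (x / 2)]

theorem hasDerivAt_arctan_sinh (x : ℝ) : HasDerivAt (fun y ↦ arctan (sinh y)) (1 / cosh x) x := by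
  refine (hasDerivAt_sinh x).arctan.congr_deriv ?_
  have := cosh_pos x
  rw [add_comm, ← cosh_sq]
  field_simp

theorem hasDerivAt_two_mul_div_sqrt (x : ℝ) :
    HasDerivAt (fun y ↦ 2 * y / √(4 + y ^ 2)) (8 / ((4 + x ^ 2) * √(4 + x ^ 2))) x := by
  have hsqrt := sq_sqrt (show 0 ≤ 4 + x ^ 2 by positivity)
  refine (((hasDerivAt_id' x).const_mul 2).div
    (((hasDerivAt_pow 2 x).const_add 4).sqrt (by positivity)) (by positivity)).congr_deriv ?_
  rw [hsqrt]
  field_simp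
  rw [hsqrt]
  push_cast
  ring

theorem arctan_sinh_le {x : ℝ} (hx : 0 ≤ x) : arctan (sinh x) ≤ 2 * x / √(4 + x ^ 2) := by
  have hderiv (y : ℝ) := (hasDerivAt_two_mul_div_sqrt y).sub (hasDerivAt_arctan_sinh y)
  have hmono := monotoneOn_of_hasDerivWithinAt_nonneg (convex_Ici 0)
    (fun y _ ↦ (hderiv y).continuousAt.continuousWithinAt) (fun y _ ↦ (hderiv y).hasDerivWithinAt)
    fun y hy ↦ ?_
  · simpa using hmono self_mem_Ici (mem_Ici.2 hx) hx
  · have hy : 0 ≤ y := interior_subset hy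
    have hc := cosh_pos y
    rw [sub_nonneg, div_le_div_iff₀ hc (by positivity), one_mul]
    refine le_of_sq_le_sq ?_ (by positivity)
    rw [mul_pow, sq_sqrt (by positivity)]
    have := one_add_sq_div_two_add_pow_four_div_le_cosh hy
    calc _ = (4 + y ^ 2) ^ 3 := by ring
      _ ≤ (8 * (1 + y ^ 2 / 2 + y ^ 4 / 32)) ^ 2 := by nlinarith [sq_nonneg (y ^ 2)]
      _ ≤ _ := by gcongr

theorem sq_arctan_sinh_le {x : ℝ} (hx : 0 ≤ x) :
    arctan (sinh x) ^ 2 ≤ 4 * x ^ 2 / (x ^ 2 + 4) := by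
  have : 0 ≤ arctan (sinh x) := arctan_nonneg.2 (sinh_nonneg_iff.2 hx)
  calc arctan (sinh x) ^ 2 ≤ (2 * x / √(4 + x ^ 2)) ^ 2 := by
        gcongr
        exact arctan_sinh_le hx
    _ = 4 * x ^ 2 / (x ^ 2 + 4) := by
        rw [div_pow, sq_sqrt (by positivity)]
        ring

end Gudermannian

section Numerics

theorem log_add_half_log_le : log (88 / 75) + 1 / 2 * log (5 / 4) ≤ 0.2715 := by
  have hlog : log ((88 / 75) ^ 2 * (5 / 4)) ≤ 0.543 := by
    rw [log_le_iff_le_exp (by norm_num)]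
    refine le_trans ?_ (sum_le_exp_of_nonneg (x := 0.543) (by norm_num) 6)
    norm_num [Finset.sum_range_succ, Nat.factorial]
  rw [log_mul (by norm_num) (by norm_num), log_pow] at hlog
  push_cast at hlog
  linarith

theorem exp_pi_mul_log_le : exp (π * (log (88 / 75) + 1 / 2 * log (5 / 4))) ≤ 2.36 := by
  have hexp : 1 + 0.147 + 0.147 ^ 2 / 2 ≤ exp 0.147 :=
    quadratic_le_exp_of_nonneg (by norm_num)
  calc exp (π * (log (88 / 75) + 1 / 2 * log (5 / 4))) ≤ exp (1 - 0.147) := by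
        gcongr
        nlinarith [log_add_half_log_le, pi_lt_d4, pi_pos]
    _ ≤ 2.7182818286 / (1 + 0.147 + 0.147 ^ 2 / 2) := by
        rw [exp_sub]
        gcongr
        exact exp_one_lt_d9.le
    _ ≤ 2.36 := by norm_num

theorem arctan_sinh_le_four_mul_exp {p Λ : ℝ} (hp : 0 < p)
    (hΛ : Λ ≤ 1 / (2 * π) * log (1 + 2 * π / (14 / 15 * p ^ 2)) + 1 / 2 * log (88 / 75) +
      1 / 4 * log (5 / 4)) :
    arctan (sinh p) ≤ 4 * exp (-π * Λ) := by
  have hE : exp (π * Λ) ^ 2 ≤ (1 + 2 * π / (14 / 15 * p ^ 2)) * 2.36 := by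
    calc exp (π * Λ) ^ 2 = exp (2 * π * Λ) := by
          rw [← exp_nat_mul]
          ring_nf
      _ ≤ exp (log (1 + 2 * π / (14 / 15 * p ^ 2)) +
            π * (log (88 / 75) + 1 / 2 * log (5 / 4))) := by
          refine exp_le_exp.2 ((mul_le_mul_of_nonneg_left hΛ two_pi_pos.le).trans_eq ?_)
          field_simp
          ring
      _ ≤ _ := by
          rw [exp_add, exp_log (by positivity)]
          gcongr
          exact exp_pi_mul_log_le
  have hsq : (arctan (sinh p) * exp (π * Λ)) ^ 2 ≤ 4 ^ 2 := by
    calc (arctan (sinh p) * exp (π * Λ)) ^ 2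
        ≤ 4 * p ^ 2 / (p ^ 2 + 4) * ((1 + 2 * π / (14 / 15 * p ^ 2)) * 2.36) := by
          rw [mul_pow]
          gcongr
          exact sq_arctan_sinh_le hp.le
      _ = 4 * 2.36 * (p ^ 2 + 15 / 7 * π) / (p ^ 2 + 4) := by
          field_simp
          ring
      _ ≤ 4 ^ 2 := by
          rw [div_le_iff₀ (by positivity)]
          nlinarith [pi_lt_d4]
  rw [neg_mul, exp_neg, ← div_eq_mul_inv, le_div_iff₀ (exp_pos _)]
  exact le_of_sq_le_sq hsq (by norm_num)

end Numerics

theorem StripSubsolution.arctan_sinh_le {x₀ T R s t θ : ℝ} {a b Λ : ℝ → ℝ} {p : ℂ → ℝ}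
    (hp : StripSubsolution x₀ T R a b p) (hs : x₀ < s) (hst : s ≤ t)
    (hΛ : ∀ r ∈ Icc s t, HasDerivAt Λ (1 / (b r - a r)) r) :
    arctan (sinh (p ⟨t, θ⟩)) ≤ 4 * exp (-π * (Λ t - Λ s)) := by
  rcases (hp.nonneg ⟨t, θ⟩).eq_or_lt with hzero | hpos
  · simp only [← hzero, sinh_zero, arctan_zero]
    positivity
  have hmax (r : ℝ) (hr : r ∈ Icc s t) : ∃ m ∈ Ioo (a r) (b r), p ⟨t, θ⟩ ≤ p ⟨r, m⟩ :=
    hp.exists_le (hs.trans_le hr.1) hr.2 hpos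
  have hflux (r : ℝ) (hr : r ∈ Icc s t) : 0 < flux R p r :=
    have ⟨_, _, hm⟩ := hmax r hr
    hp.flux_pos (hs.trans_le hr.1) (hpos.trans_le hm)
  have hdecay : FluxDecay (p ⟨t, θ⟩ ^ 2) (flux R p) (deriv (flux R p)) (fun r ↦ b r - a r) Λ s t :=
    { hasDerivAt := fun r hr ↦
        (hp.hasDerivAt_flux (hs.trans_le hr.1)).differentiableAt.hasDerivAt
      pos := hflux
      width_pos := fun r _ ↦ sub_pos.2 (hp.lt r)
      hasDerivAt_primitive := hΛ
      le_of_large := fun r hr ↦ hp.sq_flux_add_le (hs.trans_le hr.1)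
      le_of_medium := fun r hr ↦ by
        obtain ⟨m, hm, hle⟩ := hmax r hr
        refine le_trans ?_ (hp.two_mul_flux_add_four_mul_sq_le (hs.trans_le hr.1) hm)
        gcongr
      le_of_small := fun r hr ↦ by
        obtain ⟨m, hm, hle⟩ := hmax r hr
        have := hflux r hr
        refine le_trans ?_ (hp.two_mul_flux_add_pow_four_div_le (hs.trans_le hr.1) hm this)
        rw [← pow_mul]
        gcongr }
  exact arctan_sinh_le_four_mul_exp hpos (hdecay.sub_le hst (by positivity))

/-! ### From subharmonic functions to strip subsolutions -/

/-- The inverse Gudermannian function, the inverse of `arctan ∘ sinh`. It is meant for arguments in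
`(-π/2, π/2)`. -/
noncomputable def invGudermannian (x : ℝ) : ℝ := arsinh (tan x)

section InvGudermannian

variable {x : ℝ}

theorem arctan_sinh_invGudermannian (hx : x ∈ Ioo (-(π / 2)) (π / 2)) :
    arctan (sinh (invGudermannian x)) = x := by
  rw [invGudermannian, sinh_arsinh, arctan_tan hx.1 hx.2]

theorem tanh_invGudermannian (hx : x ∈ Ioo (-(π / 2)) (π / 2)) :
    tanh (invGudermannian x) = sin x := by
  rw [invGudermannian, tanh_arsinh, tan_div_sqrt_one_add_tan_sq (cos_pos_of_mem_Ioo hx)]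

theorem contDiffAt_invGudermannian {n : ℕ∞} (hx : x ∈ Ioo (-(π / 2)) (π / 2)) :
    ContDiffAt ℝ n invGudermannian x := by
  unfold invGudermannian
  exact (contDiffAt_tan.2 (cos_pos_of_mem_Ioo hx).ne').arsinh

theorem hasDerivAt_invGudermannian (hx : x ∈ Ioo (-(π / 2)) (π / 2)) :
    HasDerivAt invGudermannian (cos x)⁻¹ x := by
  have hcos : 0 < cos x := cos_pos_of_mem_Ioo hx
  have heq : (√(1 + tan x ^ 2))⁻¹ • (1 / cos x ^ 2) = (cos x)⁻¹ := by
    rw [smul_eq_mul, inv_sqrt_one_add_tan_sq hcos]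
    field_simp
  exact heq ▸ (hasDerivAt_tan hcos.ne').arsinh

theorem tanh_mul_gradSq_le_laplacian_invGudermannian {g : ℂ → ℝ} {z : ℂ}
    (hg : ContDiffAt ℝ 2 g z) (hgz : g z ∈ Ioo (-(π / 2)) (π / 2)) (hΔ : 0 ≤ Δ g z) :
    tanh (invGudermannian (g z)) * gradSq (fun w ↦ invGudermannian (g w)) z ≤
      Δ (fun w ↦ invGudermannian (g w)) z := by
  have hcos : 0 < cos (g z) := cos_pos_of_mem_Ioo hgz
  have hderiv : ∀ᶠ x in 𝓝 (g z), HasDerivAt invGudermannian (cos x)⁻¹ x :=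
    (isOpen_Ioo.eventually_mem hgz).mono fun _ ↦ hasDerivAt_invGudermannian
  rw [laplacian_comp hderiv ((hasDerivAt_cos (g z)).fun_inv hcos.ne')
    (contDiffAt_invGudermannian hgz) hg,
    gradSq_comp (hasDerivAt_invGudermannian hgz) (hg.differentiableAt two_ne_zero),
    tanh_invGudermannian hgz]
  have : 0 ≤ (cos (g z))⁻¹ * Δ g z := by positivity
  calc sin (g z) * ((cos (g z))⁻¹ ^ 2 * gradSq g z)
      = - -sin (g z) / cos (g z) ^ 2 * gradSq g z := by ring
    _ ≤ _ := by linarith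

end InvGudermannian

/-- A smooth convex substitute for `r ↦ max (r - ε) 0`, vanishing for `r ≤ ε`. -/
noncomputable def softExcess (ε r : ℝ) : ℝ := ∫ x in ε..r, smoothTransition (x / ε - 1)

section SoftExcess

variable {ε r : ℝ}

theorem contDiff_softExcess_integrand {n : ℕ∞} :
    ContDiff ℝ n fun x ↦ smoothTransition (x / ε - 1) :=
  smoothTransition.contDiff.comp (by fun_prop)

theorem hasDerivAt_softExcess :
    HasDerivAt (softExcess ε) (smoothTransition (r / ε - 1)) r :=
  have hc : Continuous fun x ↦ smoothTransition (x / ε - 1) :=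
    (contDiff_softExcess_integrand (n := 0)).continuous
  hc.integral_hasStrictDerivAt ε r |>.hasDerivAt

theorem contDiff_softExcess : ContDiff ℝ 2 (softExcess ε) := by
  rw [show (2 : WithTop ℕ∞) = 1 + 1 by norm_num, contDiff_succ_iff_deriv]
  refine ⟨fun _ ↦ hasDerivAt_softExcess.differentiableAt, by simp, ?_⟩
  rw [show deriv (softExcess ε) = _ from funext fun _ ↦ hasDerivAt_softExcess.deriv]
  exact contDiff_softExcess_integrand (n := 1)

theorem softExcess_eq_zero (hε : 0 < ε) (hr : r ≤ ε) : softExcess ε r = 0 := by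
  rw [softExcess, intervalIntegral.integral_symm, neg_eq_zero]
  refine (intervalIntegral.integral_congr fun x hx ↦ ?_).trans intervalIntegral.integral_zero
  rw [uIcc_of_le hr] at hx
  exact smoothTransition.zero_of_nonpos (sub_nonpos.2 ((div_le_one hε).2 hx.2))

theorem monotone_softExcess : Monotone (softExcess ε) :=
  monotone_of_hasDerivAt_nonneg (fun _ ↦ hasDerivAt_softExcess) fun _ ↦ smoothTransition.nonneg _

theorem softExcess_nonneg (hε : 0 < ε) : 0 ≤ softExcess ε r :=
  (softExcess_eq_zero hε (min_le_right r ε)).symm.le.trans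
    (monotone_softExcess (min_le_left r ε))

theorem softExcess_le_sub (hr : ε ≤ r) : softExcess ε r ≤ r - ε := by
  have hmono : Monotone fun x ↦ x - softExcess ε x :=
    monotone_of_hasDerivAt_nonneg (fun x ↦ (hasDerivAt_id x).sub hasDerivAt_softExcess)
      fun x ↦ sub_nonneg.2 (smoothTransition.le_one _)
  have := hmono hr
  simp only [softExcess, intervalIntegral.integral_same] at this ⊢
  linarith

theorem sub_two_mul_le_softExcess (hε : 0 < ε) : r - 2 * ε ≤ softExcess ε r := by
  rcases le_total r (2 * ε) with hr | hr
  · linarith [softExcess_nonneg (r := r) hε]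
  have hderiv (x : ℝ) :
      HasDerivAt (fun x ↦ softExcess ε x - x) (smoothTransition (x / ε - 1) - 1) x :=
    hasDerivAt_softExcess.fun_sub (hasDerivAt_id x)
  have hmono : MonotoneOn (fun x ↦ softExcess ε x - x) (Ici (2 * ε)) := by
    refine monotoneOn_of_deriv_nonneg (convex_Ici _)
      (fun x _ ↦ (hderiv x).continuousAt.continuousWithinAt)
      (fun x _ ↦ (hderiv x).differentiableAt.differentiableWithinAt) fun x hx ↦ ?_
    rw [interior_Ici] at hx
    rw [(hderiv x).deriv, smoothTransition.one_of_one_le, sub_self]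
    rw [le_sub_iff_add_le, le_div_iff₀ hε]
    linarith [hx.out]
  linarith [hmono self_mem_Ici hr hr, softExcess_nonneg (r := 2 * ε) hε]

theorem laplacian_softExcess_nonneg {v : ℂ → ℝ} {z : ℂ} (hε : 0 ≤ ε) (hv : ContDiffAt ℝ 2 v z)
    (hΔ : 0 ≤ Δ v z) : 0 ≤ Δ (fun w ↦ softExcess ε (v w)) z := by
  have hdiff : Differentiable ℝ fun x ↦ smoothTransition (x / ε - 1) :=
    (contDiff_softExcess_integrand (n := 1)).differentiable one_ne_zero
  have hmono : Monotone fun x ↦ smoothTransition (x / ε - 1) :=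
    smoothTransition.monotone.comp fun x y hxy ↦ by gcongr
  rw [laplacian_comp (.of_forall fun _ ↦ hasDerivAt_softExcess) (hdiff _).hasDerivAt
    contDiff_softExcess.contDiffAt hv]
  exact add_nonneg (mul_nonneg hmono.deriv_nonneg (add_nonneg (sq_nonneg _) (sq_nonneg _)))
    (mul_nonneg (smoothTransition.nonneg _) hΔ)

end SoftExcess

/-- The part of the vertical strip `x₀ < re z < T` between the graphs of `a` and `b` over the real
axis. -/
def curvedStrip (x₀ T : ℝ) (a b : ℝ → ℝ) : Set ℂ :=
  {z | z.re ∈ Ioo x₀ T ∧ z.im ∈ Ioo (a z.re) (b z.re)}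

/-- The function to which the flux estimates are applied: the strip subsolution built from a
subharmonic function `v ≤ 1` on `S` which is less than `ε` near the boundary. -/
noncomputable def truncation (S : Set ℂ) (ε : ℝ) (v : ℂ → ℝ) : ℂ → ℝ :=
  S.indicator fun z ↦ invGudermannian (π / 2 * softExcess ε (v z))

section Truncation

variable {x₀ T R ε : ℝ} {a b : ℝ → ℝ} {v : ℂ → ℝ} {S : Set ℂ} {z : ℂ}

theorem isOpen_curvedStrip (ha : ContinuousOn a (Ioo x₀ T)) (hb : ContinuousOn b (Ioo x₀ T)) :
    IsOpen (curvedStrip x₀ T a b) := by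
  have hre : IsOpen (Complex.re ⁻¹' Ioo x₀ T) := isOpen_Ioo.preimage Complex.continuous_re
  have hgap : ContinuousOn (fun z : ℂ ↦ (z.im - a z.re, b z.re - z.im))
      (Complex.re ⁻¹' Ioo x₀ T) :=
    (Complex.continuous_im.continuousOn.sub
      (ha.comp Complex.continuous_re.continuousOn fun _ hz ↦ hz)).prodMk
      ((hb.comp Complex.continuous_re.continuousOn fun _ hz ↦ hz).sub
        Complex.continuous_im.continuousOn)
  convert hgap.isOpen_inter_preimage hre ((isOpen_Ioi (a := 0)).prod (isOpen_Ioi (a := 0))) using 1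
  ext z
  simp [curvedStrip]

theorem pi_div_two_mul_softExcess_mem {r : ℝ} (hε : 0 < ε) (hr : r ≤ 1) :
    π / 2 * softExcess ε r ∈ Ioo (-(π / 2)) (π / 2) := by
  have hlt : softExcess ε r < 1 := by
    rcases le_total r ε with h | h
    · rw [softExcess_eq_zero hε h]
      exact one_pos
    · linarith [softExcess_le_sub h]
  have := softExcess_nonneg (r := r) hε
  constructor <;> nlinarith [pi_pos]

theorem truncation_eventuallyEq (hS : IsOpen S) (hz : z ∈ S) :
    truncation S ε v =ᶠ[𝓝 z] fun w ↦ invGudermannian (π / 2 * softExcess ε (v w)) :=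
  (hS.eventually_mem hz).mono fun _ ↦ (indicator_of_mem · _)

theorem truncation_eventuallyEq_zero (hε : 0 < ε) (hS : IsOpen S) (hz : z ∉ S)
    (hbd : z ∈ frontier S → ∀ᶠ w in 𝓝[S] z, v w < ε) : truncation S ε v =ᶠ[𝓝 z] 0 := by
  have hlt : ∀ᶠ w in 𝓝[S] z, v w < ε := by
    by_cases hcl : z ∈ closure S
    · exact hbd (hS.frontier_eq ▸ ⟨hcl, hz⟩)
    · rw [notMem_closure_iff_nhdsWithin_eq_bot.1 hcl]
      exact eventually_bot
  filter_upwards [eventually_nhdsWithin_iff.1 hlt] with w hw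
  refine indicator_apply_eq_zero.2 fun hwS ↦ ?_
  rw [softExcess_eq_zero hε (hw hwS).le, mul_zero, invGudermannian, tan_zero, arsinh_zero]

theorem truncation_nonneg (hε : 0 < ε) (hle : ∀ z ∈ S, v z ≤ 1) (z : ℂ) :
    0 ≤ truncation S ε v z :=
  indicator_nonneg (fun w hw ↦ arsinh_nonneg_iff.2 <| tan_nonneg_of_nonneg_of_le_pi_div_two
    (mul_nonneg (by positivity) (softExcess_nonneg hε))
    (pi_div_two_mul_softExcess_mem hε (hle w hw)).2.le) z

theorem contDiffAt_truncation (hε : 0 < ε) (hS : IsOpen S) (hz : z ∈ S) (hv : ContDiffAt ℝ 2 v z)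
    (hvz : v z ≤ 1) : ContDiffAt ℝ 2 (truncation S ε v) z := by
  have hg : ContDiffAt ℝ 2 (fun w ↦ π / 2 * softExcess ε (v w)) z :=
    contDiffAt_const.mul (contDiff_softExcess.contDiffAt.fun_comp z hv)
  exact ((contDiffAt_invGudermannian (n := 2)
    (pi_div_two_mul_softExcess_mem hε hvz)).fun_comp z hg).congr_of_eventuallyEq
      (truncation_eventuallyEq hS hz)

theorem tanh_mul_gradSq_truncation_le (hε : 0 < ε) (hS : IsOpen S) (hz : z ∈ S)
    (hv : ContDiffAt ℝ 2 v z) (hvz : v z ≤ 1) (hΔ : 0 ≤ Δ v z) :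
    tanh (truncation S ε v z) * gradSq (truncation S ε v) z ≤ Δ (truncation S ε v) z := by
  have heq := truncation_eventuallyEq (ε := ε) (v := v) hS hz
  have hsoft : ContDiffAt ℝ 2 (fun w ↦ softExcess ε (v w)) z :=
    contDiff_softExcess.contDiffAt.fun_comp z hv
  have hg : ContDiffAt ℝ 2 (fun w ↦ π / 2 * softExcess ε (v w)) z := contDiffAt_const.mul hsoft
  have hΔg : 0 ≤ Δ (fun w ↦ π / 2 * softExcess ε (v w)) z :=
    (smul_nonneg (by positivity) (laplacian_softExcess_nonneg hε.le hv hΔ)).trans_eq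
      (laplacian_smul (π / 2) hsoft).symm
  have hgrad : gradSq (truncation S ε v) z =
      gradSq (fun w ↦ invGudermannian (π / 2 * softExcess ε (v w))) z := by
    simp only [gradSq, (D_congr heq).eq_of_nhds]
  rw [(laplacian_congr_nhds heq).eq_of_nhds, heq.eq_of_nhds, hgrad]
  have hbound := tanh_mul_gradSq_le_laplacian_invGudermannian hg
    (pi_div_two_mul_softExcess_mem hε hvz) hΔg
  exact hbound

theorem stripSubsolution_truncation (hε : 0 < ε) (ha : Continuous a) (hb : Continuous b)
    (hab : ∀ s, a s < b s) (haR : ∀ s, -R ≤ a s) (hbR : ∀ s, b s ≤ R)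
    (hv : ContDiffOn ℝ 2 v (curvedStrip x₀ T a b)) (hΔ : ∀ z ∈ curvedStrip x₀ T a b, 0 ≤ Δ v z)
    (hle : ∀ z ∈ curvedStrip x₀ T a b, v z ≤ 1)
    (hbd : ∀ ζ ∈ frontier (curvedStrip x₀ T a b), x₀ < ζ.re →
      ∀ᶠ z in 𝓝[curvedStrip x₀ T a b] ζ, v z < ε) :
    StripSubsolution x₀ T R a b (truncation (curvedStrip x₀ T a b) ε v) := by
  have hS : IsOpen (curvedStrip x₀ T a b) := isOpen_curvedStrip ha.continuousOn hb.continuousOn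
  have hv' (z : ℂ) (hz : z ∈ curvedStrip x₀ T a b) : ContDiffAt ℝ 2 v z :=
    hv.contDiffAt (hS.mem_nhds hz)
  have hzero (z : ℂ) (hx : x₀ < z.re) (hz : z ∉ curvedStrip x₀ T a b) :
      truncation (curvedStrip x₀ T a b) ε v =ᶠ[𝓝 z] 0 :=
    truncation_eventuallyEq_zero hε hS hz (hbd z · hx)
  refine
    { lt := hab, neg_le := haR, le := hbR, nonneg := truncation_nonneg hε hle,
      contDiffOn := fun z hx ↦ ContDiffAt.contDiffWithinAt ?_
      le_laplacian := fun z hx ↦ ?_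
      eventuallyEq_zero := fun z hx hz ↦ hzero z hx fun h ↦ hz h.2
      eq_zero_of_le := fun z hz ↦ indicator_of_notMem (fun h ↦ h.1.2.not_ge hz) _ }
  · by_cases hz : z ∈ curvedStrip x₀ T a b
    · exact contDiffAt_truncation hε hS hz (hv' z hz) (hle z hz)
    · exact contDiffAt_const.congr_of_eventuallyEq (hzero z hx hz)
  · by_cases hz : z ∈ curvedStrip x₀ T a b
    · exact tanh_mul_gradSq_truncation_le hε hS hz (hv' z hz) (hle z hz) (hΔ z hz)
    · rw [(laplacian_congr_nhds (hzero z hx hz)).eq_of_nhds, (hzero z hx hz).eq_of_nhds]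
      simp [show (0 : ℂ → ℝ) = fun _ ↦ 0 from rfl]

end Truncation

section CurvedStrip

variable {x₀ T : ℝ} {a b : ℝ → ℝ} {v : ℂ → ℝ}

theorem pi_div_two_mul_softExcess_le {R s ε : ℝ} {Λ : ℝ → ℝ} {z : ℂ} (hε : 0 < ε)
    (ha : Continuous a) (hb : Continuous b) (hab : ∀ s, a s < b s) (haR : ∀ s, -R ≤ a s)
    (hbR : ∀ s, b s ≤ R) (hv : ContDiffOn ℝ 2 v (curvedStrip x₀ T a b))
    (hΔ : ∀ z ∈ curvedStrip x₀ T a b, 0 ≤ Δ v z) (hle : ∀ z ∈ curvedStrip x₀ T a b, v z ≤ 1)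
    (hbd : ∀ ζ ∈ frontier (curvedStrip x₀ T a b), x₀ < ζ.re →
      ∀ᶠ z in 𝓝[curvedStrip x₀ T a b] ζ, v z < ε)
    (hΛ : ∀ r, HasDerivAt Λ (1 / (b r - a r)) r) (hz : z ∈ curvedStrip x₀ T a b)
    (hs : s ∈ Ioc x₀ z.re) :
    π / 2 * softExcess ε (v z) ≤ 4 * exp (-π * (Λ z.re - Λ s)) := by
  have hp := stripSubsolution_truncation hε ha hb hab haR hbR hv hΔ hle hbd
  have h := hp.arctan_sinh_le (θ := z.im) hs.1 hs.2 fun r _ ↦ hΛ r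
  rwa [Complex.eta, truncation, indicator_of_mem hz,
    arctan_sinh_invGudermannian (pi_div_two_mul_softExcess_mem hε (hle z hz))] at h

theorem le_of_forall_softExcess_le {x c : ℝ} (h : ∀ ε > 0, softExcess ε x ≤ c) : x ≤ c := by
  refine le_of_forall_pos_le_add fun η hη ↦ ?_
  linarith [h (η / 2) (by positivity), sub_two_mul_le_softExcess (r := x) (half_pos hη)]

theorem le_of_continuous_of_curvedStrip {R : ℝ}
    (ha : Continuous a) (hb : Continuous b) (hab : ∀ s, a s < b s) (haR : ∀ s, -R ≤ a s)
    (hbR : ∀ s, b s ≤ R) (hv : ContDiffOn ℝ 2 v (curvedStrip x₀ T a b))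
    (hΔ : ∀ z ∈ curvedStrip x₀ T a b, 0 ≤ Δ v z) (hle : ∀ z ∈ curvedStrip x₀ T a b, v z ≤ 1)
    (hbd : ∀ ζ ∈ frontier (curvedStrip x₀ T a b), x₀ < ζ.re →
      ∀ ε > 0, ∀ᶠ z in 𝓝[curvedStrip x₀ T a b] ζ, v z < ε) :
    ∀ z ∈ curvedStrip x₀ T a b,
      v z ≤ 8 / π * exp (-π * ∫ s in x₀..z.re, 1 / (b s - a s)) := by
  intro z hz
  let Λ (s : ℝ) : ℝ := ∫ r in x₀..s, 1 / (b r - a r)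
  have hwidth : Continuous fun r ↦ 1 / (b r - a r) :=
    continuous_const.div (hb.sub ha) fun r ↦ (sub_pos.2 (hab r)).ne'
  have hΛ (r : ℝ) : HasDerivAt Λ (1 / (b r - a r)) r :=
    (hwidth.integral_hasStrictDerivAt x₀ r).hasDerivAt
  refine le_of_forall_softExcess_le fun ε hε ↦ ?_
  have htendsto : Tendsto (fun s ↦ 4 * exp (-π * (Λ z.re - Λ s))) (𝓝[>] x₀)
      (𝓝 (4 * exp (-π * (Λ z.re - Λ x₀)))) := by
    have := (hΛ x₀).continuousAt
    exact ContinuousAt.continuousWithinAt (by fun_prop)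
  have hlim : π / 2 * softExcess ε (v z) ≤ 4 * exp (-π * (Λ z.re - Λ x₀)) := by
    refine ge_of_tendsto htendsto ?_
    filter_upwards [Ioc_mem_nhdsGT hz.1.1] with s hs
    exact pi_div_two_mul_softExcess_le hε ha hb hab haR hbR hv hΔ hle
      (fun ζ hζ hx ↦ hbd ζ hζ hx ε hε) hΛ hz hs
  rw [show Λ x₀ = 0 from intervalIntegral.integral_same, sub_zero] at hlim
  calc softExcess ε (v z) = 2 / π * (π / 2 * softExcess ε (v z)) := by field_simp
    _ ≤ 2 / π * (4 * exp (-π * Λ z.re)) := by gcongr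
    _ = 8 / π * exp (-π * Λ z.re) := by ring

theorem exists_continuous_bounded_extension {f g : ℝ → ℝ} (hx : x₀ ≤ T)
    (hf : ContinuousOn f (Icc x₀ T)) (hg : ContinuousOn g (Icc x₀ T))
    (hfg : ∀ s ∈ Icc x₀ T, f s < g s) :
    ∃ (R : ℝ) (F G : ℝ → ℝ), Continuous F ∧ Continuous G ∧ EqOn F f (Icc x₀ T) ∧
      EqOn G g (Icc x₀ T) ∧ (∀ s, F s < G s) ∧ (∀ s, -R ≤ F s) ∧ ∀ s, G s ≤ R := by
  obtain ⟨M, hM⟩ := isCompact_Icc.exists_bound_of_continuousOn hf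
  obtain ⟨N, hN⟩ := isCompact_Icc.exists_bound_of_continuousOn hg
  have hproj (s : ℝ) : (projIcc x₀ T hx s : ℝ) ∈ Icc x₀ T := (projIcc x₀ T hx s).2
  refine ⟨max M N, fun s ↦ f (projIcc x₀ T hx s), fun s ↦ g (projIcc x₀ T hx s),
    hf.comp_continuous (by fun_prop) hproj, hg.comp_continuous (by fun_prop) hproj,
    fun s hs ↦ ?_, fun s hs ↦ ?_, fun s ↦ hfg _ (hproj s), fun s ↦ ?_, fun s ↦ ?_⟩
  · simp only [projIcc_of_mem hx hs]
  · simp only [projIcc_of_mem hx hs]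
  · exact (neg_le_neg (le_max_left M N)).trans (neg_le_of_abs_le (hM _ (hproj s)))
  · exact (le_of_abs_le (hN _ (hproj s))).trans (le_max_right M N)

theorem curvedStrip_congr {a' b' : ℝ → ℝ} (ha : EqOn a a' (Icc x₀ T)) (hb : EqOn b b' (Icc x₀ T)) :
    curvedStrip x₀ T a b = curvedStrip x₀ T a' b' := by
  ext z
  refine and_congr_right fun hz ↦ ?_
  rw [ha (Ioo_subset_Icc_self hz), hb (Ioo_subset_Icc_self hz)]

theorem le_of_curvedStrip (ha : ContinuousOn a (Icc x₀ T)) (hb : ContinuousOn b (Icc x₀ T))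
    (hab : ∀ s ∈ Icc x₀ T, a s < b s) (hv : ContDiffOn ℝ 2 v (curvedStrip x₀ T a b))
    (hΔ : ∀ z ∈ curvedStrip x₀ T a b, 0 ≤ Δ v z) (hle : ∀ z ∈ curvedStrip x₀ T a b, v z ≤ 1)
    (hbd : ∀ ζ ∈ frontier (curvedStrip x₀ T a b), x₀ < ζ.re →
      ∀ ε > 0, ∀ᶠ z in 𝓝[curvedStrip x₀ T a b] ζ, v z < ε) :
    ∀ z ∈ curvedStrip x₀ T a b,
      v z ≤ 8 / π * exp (-π * ∫ s in x₀..z.re, 1 / (b s - a s)) := by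
  intro z hz
  obtain ⟨R, A, B, hA, hB, hAa, hBb, hAB, hAR, hBR⟩ :=
    exists_continuous_bounded_extension (hz.1.1.trans hz.1.2).le ha hb hab
  have hint : ∫ s in x₀..z.re, 1 / (B s - A s) = ∫ s in x₀..z.re, 1 / (b s - a s) := by
    refine intervalIntegral.integral_congr fun s hs ↦ ?_
    rw [uIcc_of_le hz.1.1.le] at hs
    have hsT : s ∈ Icc x₀ T := ⟨hs.1, hs.2.trans hz.1.2.le⟩
    simp only [hAa hsT, hBb hsT]
  rw [← curvedStrip_congr hAa hBb] at hv hΔ hle hbd hz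
  exact hint ▸ le_of_continuous_of_curvedStrip hA hB hAB hAR hBR hv hΔ hle hbd z hz

end CurvedStrip

/-! ### Polar coordinates -/

section Conformal

theorem add_rotate_eq (B : ℂ →L[ℝ] ℂ →L[ℝ] ℝ) (c : ℂ) :
    B c c + B (c * I) (c * I) = ‖c‖ ^ 2 * (B 1 1 + B I I) := by
  have hc : c = c.re • (1 : ℂ) + c.im • I := by apply Complex.ext <;> simp
  have hcI : c * I = (-c.im) • (1 : ℂ) + c.re • I := by apply Complex.ext <;> simp
  rw [hcI, ← Complex.normSq_eq_norm_sq, Complex.normSq_apply]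
  nth_rewrite 1 2 [hc]
  simp only [map_add, map_smul, add_apply, smul_apply, smul_eq_mul]
  ring

theorem laplacian_comp_of_analyticAt {f : ℂ → ℂ} {u : ℂ → ℝ} {z : ℂ} (hf : AnalyticAt ℂ f z)
    (hu : ContDiffAt ℝ 2 u (f z)) : Δ (fun w ↦ u (f w)) z = ‖deriv f z‖ ^ 2 * Δ u (f z) := by
  have hD (v : ℂ) : D v (fun w ↦ u (f w)) =ᶠ[𝓝 z] fun w ↦ fderiv ℝ u (f w) (v * deriv f w) := by
    filter_upwards [hf.eventually_analyticAt,
      hf.continuousAt.eventually (hu.eventually (by simp))] with w hw huw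
    have := (huw.differentiableAt two_ne_zero).hasFDerivAt.comp w
      hw.differentiableAt.hasDerivAt.complexToReal_fderiv
    exact (DFunLike.congr_fun this.fderiv v).trans (by simp [mul_comm])
  have hdu : DifferentiableAt ℝ (fderiv ℝ u) (f z) :=
    (hu.fderiv_right (m := 1) (by norm_num)).differentiableAt one_ne_zero
  have hDD (v : ℂ) : D v (D v fun w ↦ u (f w)) z =
      fderiv ℝ (fderiv ℝ u) (f z) (v * deriv f z) (v * deriv f z) +
        fderiv ℝ u (f z) (v * (v * deriv (deriv f) z)) := by
    have := (hdu.hasFDerivAt.comp z hf.differentiableAt.hasDerivAt.complexToReal_fderiv).clm_apply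
      (hf.deriv.differentiableAt.hasDerivAt.complexToReal_fderiv.const_mul v)
    rw [(D_congr (hD v)).eq_of_nhds]
    exact (DFunLike.congr_fun this.fderiv v).trans (by simp [add_comm, mul_comm])
  have hΔu : Δ u (f z) = fderiv ℝ (fderiv ℝ u) (f z) 1 1 + fderiv ℝ (fderiv ℝ u) (f z) I I := by
    simp [laplacian_eq_iteratedFDeriv_complexPlane, iteratedFDeriv_two_apply]
  have hcancel : I * (I * deriv (deriv f) z) = -deriv (deriv f) z := by
    rw [← mul_assoc, Complex.I_mul_I, neg_one_mul]
  rw [laplacian_eq (f := fun w ↦ u (f w)) (hu.comp z (hf.contDiffAt.restrict_scalars ℝ)), hDD,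
    hDD, hcancel, map_neg, hΔu, ← add_rotate_eq]
  simp only [one_mul, mul_comm I]
  ring

end Conformal

/-- The preimage under the exponential of the part of `polarDomain ρ₀ φp φm` outside the disc of
radius `r₀`, on the sheet of the logarithm on which the imaginary part is the polar angle. -/
def logStrip (r₀ ρ₀ : ℝ) (φp φm : ℝ → ℝ) : Set ℂ :=
  curvedStrip (log r₀) (log ρ₀) (fun s ↦ φp (exp s)) fun s ↦ φm (exp s)

section Polar

variable {r₀ ρ₀ r : ℝ} {φp φm : ℝ → ℝ} {z w ζ : ℂ}

theorem eq_of_exp_eq_exp (h : Complex.exp z = Complex.exp w) (him : |z.im - w.im| < 2 * π) :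
    z = w := by
  obtain ⟨n, hn⟩ := Complex.exp_eq_exp_iff_exists_int.1 h
  have hsub : z.im - w.im = n * (2 * π) := by simp [hn]
  have hn_lt : |(n : ℝ)| < 1 := by
    rwa [hsub, abs_mul, abs_of_pos two_pi_pos, mul_lt_iff_lt_one_left two_pi_pos] at him
  have hn0 : n = 0 := Int.abs_lt_one_iff.1 (mod_cast hn_lt)
  simpa [hn0] using hn

theorem closure_curvedStrip_subset {x₀ T : ℝ} {a b : ℝ → ℝ} (ha : ContinuousOn a (Icc x₀ T))
    (hb : ContinuousOn b (Icc x₀ T)) :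
    closure (curvedStrip x₀ T a b) ⊆ {z | z.re ∈ Icc x₀ T ∧ z.im ∈ Icc (a z.re) (b z.re)} := by
  have hK : IsClosed (Complex.re ⁻¹' Icc x₀ T) := isClosed_Icc.preimage Complex.continuous_re
  have hcomp {f : ℝ → ℝ} (hf : ContinuousOn f (Icc x₀ T)) :
      ContinuousOn (fun z : ℂ ↦ f z.re) (Complex.re ⁻¹' Icc x₀ T) :=
    hf.comp Complex.continuous_re.continuousOn (mapsTo_preimage _ _)
  have him : ContinuousOn Complex.im (Complex.re ⁻¹' Icc x₀ T) := Complex.continuous_im.continuousOn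
  have hlower := (him.sub (hcomp ha)).preimage_isClosed_of_isClosed hK (isClosed_Ici (a := 0))
  have hupper := ((hcomp hb).sub him).preimage_isClosed_of_isClosed hK (isClosed_Ici (a := 0))
  refine (closure_minimal (fun z hz ↦ ?_) (hlower.inter hupper)).trans fun z hz ↦
    ⟨hz.1.1, sub_nonneg.1 hz.1.2, sub_nonneg.1 hz.2.2⟩
  have hz' := Ioo_subset_Icc_self hz.1
  exact ⟨⟨hz', sub_nonneg.2 hz.2.1.le⟩, hz', sub_nonneg.2 hz.2.2.le⟩

theorem lt_norm_exp_iff (hr₀ : 0 < r₀) : r₀ < ‖Complex.exp z‖ ↔ log r₀ < z.re := by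
  rw [Complex.norm_exp, log_lt_iff_lt_exp hr₀]

theorem image_exp_logStrip (hr₀ : 0 < r₀) (hρ₀ : 0 < ρ₀) :
    Complex.exp '' logStrip r₀ ρ₀ φp φm = polarDomain ρ₀ φp φm ∩ {z | r₀ < ‖z‖} := by
  ext z
  constructor
  · rintro ⟨w, ⟨⟨hr, hρ⟩, hp, hm⟩, rfl⟩
    refine ⟨⟨exp w.re, w.im, exp_pos _, (lt_log_iff_exp_lt hρ₀).1 hρ, hp, hm, ?_⟩, ?_⟩
    · rw [Complex.ofReal_exp, ← Complex.exp_add, Complex.re_add_im]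
    · exact (lt_norm_exp_iff hr₀).2 hr
  · rintro ⟨⟨r, θ, hr, hρ, hp, hm, rfl⟩, hz⟩
    replace hz : r₀ < r := by simpa [abs_of_pos hr] using hz
    refine ⟨⟨log r, θ⟩, ⟨⟨log_lt_log hr₀ hz, log_lt_log hr hρ⟩, ?_⟩, ?_⟩
    · simpa only [exp_log hr] using ⟨hp, hm⟩
    · rw [Complex.mk_eq_add_mul_I, Complex.exp_add, ← Complex.ofReal_exp, exp_log hr]

theorem mapsTo_exp_logStrip (hr₀ : 0 < r₀) (hρ₀ : 0 < ρ₀) :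
    MapsTo Complex.exp (logStrip r₀ ρ₀ φp φm) (polarDomain ρ₀ φp φm ∩ {z | r₀ < ‖z‖}) :=
  mapsTo_iff_image_subset.2 (image_exp_logStrip hr₀ hρ₀).subset

theorem mapsTo_exp_Icc_log (hr₀ : 0 < r₀) (hρ₀ : 0 < ρ₀) :
    MapsTo exp (Icc (log r₀) (log ρ₀)) (Icc r₀ ρ₀) := fun _ hs ↦
  ⟨(log_le_iff_le_exp hr₀).1 hs.1, (le_log_iff_exp_le hρ₀).1 hs.2⟩

theorem continuousOn_comp_exp (hr₀ : 0 < r₀) (hρ₀ : 0 < ρ₀) {f : ℝ → ℝ}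
    (hf : ContinuousOn f (Icc r₀ ρ₀)) :
    ContinuousOn (fun s ↦ f (exp s)) (Icc (log r₀) (log ρ₀)) :=
  hf.comp continuous_exp.continuousOn (mapsTo_exp_Icc_log hr₀ hρ₀)

theorem isOpen_logStrip (hr₀ : 0 < r₀) (hρ₀ : 0 < ρ₀) (hp : ContinuousOn φp (Icc r₀ ρ₀))
    (hm : ContinuousOn φm (Icc r₀ ρ₀)) : IsOpen (logStrip r₀ ρ₀ φp φm) :=
  isOpen_curvedStrip ((continuousOn_comp_exp hr₀ hρ₀ hp).mono Ioo_subset_Icc_self)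
    ((continuousOn_comp_exp hr₀ hρ₀ hm).mono Ioo_subset_Icc_self)

theorem exp_mem_frontier_polarDomain (hr₀ : 0 < r₀) (hρ₀ : 0 < ρ₀)
    (hp : ContinuousOn φp (Icc r₀ ρ₀)) (hm : ContinuousOn φm (Icc r₀ ρ₀))
    (hΘ : ∀ r ∈ Icc r₀ ρ₀, φm r - φp r ≤ 2 * π) (hζ : ζ ∈ frontier (logStrip r₀ ρ₀ φp φm))
    (hre : log r₀ < ζ.re) : Complex.exp ζ ∈ frontier (polarDomain ρ₀ φp φm) := by
  refine ⟨map_mem_closure Complex.continuous_exp hζ.1 fun w hw ↦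
    (mapsTo_exp_logStrip hr₀ hρ₀ hw).1, fun hint ↦ hζ.2 ?_⟩
  obtain ⟨w, hw, hwζ⟩ := (image_exp_logStrip hr₀ hρ₀).superset
    ⟨interior_subset hint, (lt_norm_exp_iff hr₀).2 hre⟩
  obtain ⟨hζre, hζp, hζm⟩ := closure_curvedStrip_subset (continuousOn_comp_exp hr₀ hρ₀ hp)
    (continuousOn_comp_exp hr₀ hρ₀ hm) hζ.1
  have hre_eq : w.re = ζ.re := by
    simpa only [Complex.norm_exp, exp_eq_exp] using congrArg norm hwζ
  obtain ⟨-, hwp, hwm⟩ := id hw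
  rw [hre_eq] at hwp hwm
  have hwidth := hΘ _ (mapsTo_exp_Icc_log hr₀ hρ₀ hζre)
  have hwζ_eq : w = ζ := eq_of_exp_eq_exp hwζ (abs_sub_lt_iff.2 ⟨by linarith, by linarith⟩)
  rw [(isOpen_logStrip hr₀ hρ₀ hp hm).interior_eq]
  exact hwζ_eq ▸ hw

theorem integral_one_div_mul (hr₀ : 0 < r₀) (hr : 0 < r) (f : ℝ → ℝ) :
    ∫ s in r₀..r, 1 / (s * f s) = ∫ x in log r₀..log r, 1 / f (exp x) := by
  have h := intervalIntegral.integral_comp_mul_deriv_of_deriv_nonneg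
    (g := fun s ↦ 1 / (s * f s)) continuous_exp.continuousOn (a := log r₀) (b := log r)
    (fun x _ ↦ hasDerivAt_exp x) fun x _ ↦ (exp_pos x).le
  rw [exp_log hr₀, exp_log hr] at h
  rw [← h]
  refine intervalIntegral.integral_congr fun x _ ↦ ?_
  have := (exp_pos x).ne'
  simp only [Function.comp_apply]
  field_simp

theorem eventually_comp_exp_lt {u : ℂ → ℝ} (hr₀ : 0 < r₀) (hρ₀ : 0 < ρ₀)
    (hle : ∀ z ∈ polarDomain ρ₀ φp φm, r₀ < ‖z‖ → u z ≤ 1) (hre : log r₀ < ζ.re) {ε : ℝ}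
    (hlimsup : limsup u (𝓝[polarDomain ρ₀ φp φm] Complex.exp ζ) < ε) :
    ∀ᶠ w in 𝓝[logStrip r₀ ρ₀ φp φm] ζ, u (Complex.exp w) < ε := by
  have hnorm : r₀ < ‖Complex.exp ζ‖ := (lt_norm_exp_iff hr₀).2 hre
  have hbounded : ∀ᶠ z in 𝓝[polarDomain ρ₀ φp φm] Complex.exp ζ, u z ≤ 1 := by
    filter_upwards [self_mem_nhdsWithin, mem_nhdsWithin_of_mem_nhds
      (continuous_norm.continuousAt.eventually_const_lt hnorm)] using hle
  have hexp : Tendsto Complex.exp (𝓝[logStrip r₀ ρ₀ φp φm] ζ)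
      (𝓝[polarDomain ρ₀ φp φm] Complex.exp ζ) :=
    Complex.continuous_exp.continuousWithinAt.tendsto_nhdsWithin fun w hw ↦
      (mapsTo_exp_logStrip hr₀ hρ₀ hw).1
  exact hexp.eventually
    (eventually_lt_of_limsup_lt hlimsup (isBoundedUnder_of_eventually_le hbounded))

end Polar

end Carleman

open Carleman Filter InnerProductSpace Laplacian Real Topology in
theorem stmt_5_general (ρ₀ r₀ : ℝ) (hρ₀ : 0 < ρ₀) (hr₀ : 0 < r₀) (φp φm : ℝ → ℝ)
    (hp : ContinuousOn φp (Icc r₀ ρ₀)) (hm : ContinuousOn φm (Icc r₀ ρ₀))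
    (hΘpos : ∀ r ∈ Icc r₀ ρ₀, 0 < φm r - φp r) (hΘle : ∀ r ∈ Icc r₀ ρ₀, φm r - φp r ≤ 2 * π)
    (u : ℂ → ℝ) (hu : ContDiffOn ℝ 2 u (polarDomain ρ₀ φp φm ∩ {z | r₀ < ‖z‖}))
    (hΔ : ∀ z ∈ polarDomain ρ₀ φp φm, r₀ < ‖z‖ → 0 ≤ Δ u z)
    (hle : ∀ z ∈ polarDomain ρ₀ φp φm, r₀ < ‖z‖ → u z ≤ 1)
    (hbd : ∀ ζ ∈ frontier (polarDomain ρ₀ φp φm), r₀ < ‖ζ‖ →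
      limsup u (𝓝[polarDomain ρ₀ φp φm] ζ) ≤ 0) :
    ∀ z ∈ polarDomain ρ₀ φp φm, r₀ < ‖z‖ →
      u z ≤ 8 / π * exp (-π * ∫ s in r₀..‖z‖, 1 / (s * (φm s - φp s))) := by
  have himage := image_exp_logStrip (φp := φp) (φm := φm) hr₀ hρ₀
  have hmaps := mapsTo_exp_logStrip (φp := φp) (φm := φm) hr₀ hρ₀
  have hopen : IsOpen (polarDomain ρ₀ φp φm ∩ {z | r₀ < ‖z‖}) :=
    himage ▸ Complex.isOpenMap_exp _ (isOpen_logStrip hr₀ hρ₀ hp hm)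
  intro z hz hz'
  obtain ⟨w, hw, rfl⟩ := himage.superset ⟨hz, hz'⟩
  rw [Complex.norm_exp, integral_one_div_mul hr₀ (exp_pos _), log_exp]
  refine le_of_curvedStrip (v := fun w ↦ u (Complex.exp w)) (continuousOn_comp_exp hr₀ hρ₀ hp)
    (continuousOn_comp_exp hr₀ hρ₀ hm)
    (fun s hs ↦ sub_pos.1 (hΘpos _ (mapsTo_exp_Icc_log hr₀ hρ₀ hs)))
    (hu.comp Complex.contDiff_exp.contDiffOn hmaps) (fun w hw ↦ ?_)
    (fun w hw ↦ hle _ (hmaps hw).1 (hmaps hw).2) (fun ζ hζ hre ε hε ↦ ?_) w hw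
  · rw [laplacian_comp_of_analyticAt (Complex.differentiable_exp.analyticAt w)
      (hu.contDiffAt (hopen.mem_nhds (hmaps hw)))]
    exact mul_nonneg (sq_nonneg _) (hΔ _ (hmaps hw).1 (hmaps hw).2)
  · have hζ' := exp_mem_frontier_polarDomain hr₀ hρ₀ hp hm hΘle hζ hre
    exact eventually_comp_exp_lt hr₀ hρ₀ hle hre
      ((hbd _ hζ' ((lt_norm_exp_iff hr₀).2 hre)).trans_lt hε)

/-- the Carleman-type extremal-length estimate: on the polar domain `Ω`
with angular width `Θ(r) = φ₋(r) − φ₊(r) ∈ (0, 2π]`, any harmonic `u ≤ 1` whose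
boundary limsup is `≤ 0` on `∂Ω ∩ {|ζ| > r₀}` satisfies
`u z ≤ (8/π) exp(−π ∫_{r₀}^{|z|} ds/(s Θ(s)))` for `z ∈ Ω` with `|z| > r₀`. -/
theorem stmt_5 (ρ₀ r₀ : ℝ) (hρ₀ : 0 < ρ₀) (hr₀ : 0 < r₀) (hr : r₀ < ρ₀)
    (φp φm : ℝ → ℝ)
    (hφpc : ContinuousOn φp (Icc 0 ρ₀)) (hφmc : ContinuousOn φm (Icc 0 ρ₀))
    (hΘpos : ∀ r ∈ Ioc (0:ℝ) ρ₀, 0 < φm r - φp r)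
    (hΘle : ∀ r ∈ Ioc (0:ℝ) ρ₀, φm r - φp r ≤ 2 * Real.pi)
    (u : ℂ → ℝ) (hu : HarmonicOnSet u (polarDomain ρ₀ φp φm))
    (hub : ∀ z ∈ polarDomain ρ₀ φp φm, u z ≤ 1)
    (hbd : ∀ ζ ∈ frontier (polarDomain ρ₀ φp φm), r₀ < ‖ζ‖ →
      Filter.limsup u (nhdsWithin ζ (polarDomain ρ₀ φp φm)) ≤ 0) :
    ∀ z ∈ polarDomain ρ₀ φp φm, r₀ < ‖z‖ →
      u z ≤ (8 / Real.pi) *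
        Real.exp (-Real.pi * ∫ s in r₀..‖z‖, 1 / (s * (φm s - φp s))) := by
  have hsub : Icc r₀ ρ₀ ⊆ Ioc 0 ρ₀ := Icc_subset_Ioc_left hr₀
  have hΔ (z) (hz : z ∈ polarDomain ρ₀ φp φm) : Laplacian.laplacian u z = 0 :=
    (congrFun (InnerProductSpace.laplacian_eq_iteratedFDeriv_complexPlane u) z).trans (hu.2 z hz)
  exact stmt_5_general ρ₀ r₀ hρ₀ hr₀ φp φm (hφpc.mono (hsub.trans Ioc_subset_Icc_self))
    (hφmc.mono (hsub.trans Ioc_subset_Icc_self)) (fun r hr ↦ hΘpos r (hsub hr))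
    (fun r hr ↦ hΘle r (hsub hr)) u (hu.1.mono inter_subset_left) (fun z hz _ ↦ (hΔ z hz).ge)
    (fun z hz _ ↦ hub z hz) hbd
end
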